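/- Let q be a prime power and x_1,…,x_n positive reals with x_1+⋯+x_n = 1, and let Ψ^{G/B}, Ψ^{S_n} denote the unique stationary distributions of T_{G/B}(q,x) and T_{S_n}(q,x) respectively. Then: (a) Ψ^{G/B}_{gB} = Ψ^{G/B}_{g'B} whenever proj_{S_n}(gB) = proj_{S_n}(g'B), i.e. whenever gB and g'B lie in the same double coset; (b) for every π ∈ S_n, Ψ^{S_n}_π = ∑_{gB : gB∈[π]} Ψ^{G/B}_{gB} = q^{coinv(π)}·Ψ^{G/B}_{gB} for any gB ∈ [π], where coinv(π) = #{(i,j) : i < j, π_i < π_j}; (c) if moreover x is m-compatible for a composition m of n and x̄_j = [m_j]_q·x_{n_j}, then for every w ∈ W_m, the unique stationary distribution Ψ^{W_m} of T_{W_m}(q,x̄) satisfies Ψ^{W_m}_w = ∑_{π∈S_n : destd_m(π)=w} Ψ^{S_n}_π. -/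

import Mathlib

open scoped Classical
set_option linter.unusedSectionVars false
set_option synthInstance.maxHeartbeats 1000000
set_option maxHeartbeats 1000000

noncomputable section

namespace QTsetlin

/-- `M` is upper triangular. -/
def upperTri {F : Type} [Field F] {n : ℕ} (M : Matrix (Fin n) (Fin n) F) : Prop :=
  ∀ i j : Fin n, j < i → M i j = 0

/-- `M` is lower triangular. -/
def lowerTri {F : Type} [Field F] {n : ℕ} (M : Matrix (Fin n) (Fin n) F) : Prop :=
  ∀ i j : Fin n, i < j → M i j = 0

variable (F : Type) [Field F] [Fintype F] [DecidableEq F] (n : ℕ)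

/-- The general linear group `G = GL_n(F_q)`. -/
abbrev GLn := GL (Fin n) F

/-- The Borel subgroup `B` of invertible upper triangular matrices. -/
def Bsub : Subgroup (GLn F n) where
  carrier := {g | upperTri (g : Matrix (Fin n) (Fin n) F)}
  one_mem' := by
    intro i j hij
    simp [Matrix.one_apply, (Fin.ne_of_lt hij).symm]
  mul_mem' := by
    intro a b ha hb i j hij
    exact Matrix.BlockTriangular.mul ha hb hij
  inv_mem' := by
    intro a ha
    have hdet : IsUnit ((a : Matrix (Fin n) (Fin n) F).det) :=
      (Matrix.isUnit_iff_isUnit_det _).mp a.isUnit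
    have hinv : Invertible (a : Matrix (Fin n) (Fin n) F) :=
      Matrix.invertibleOfIsUnitDet _ hdet
    have h2 : ((a : Matrix (Fin n) (Fin n) F)⁻¹).BlockTriangular (id : Fin n → Fin n) :=
      Matrix.blockTriangular_inv_of_blockTriangular ha
    show upperTri ((a⁻¹ : GLn F n) : Matrix (Fin n) (Fin n) F)
    rw [show ((a⁻¹ : GLn F n) : Matrix (Fin n) (Fin n) F)
        = (a : Matrix (Fin n) (Fin n) F)⁻¹ from Matrix.coe_units_inv a]
    exact h2

/-- The set of cosets `G/B`. -/
abbrev Cosets := GLn F n ⧸ Bsub F n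

/-- permutation matrix of `π`: entry 1 in positions `(π j, j)`. -/
def permMat (π : Equiv.Perm (Fin n)) : Matrix (Fin n) (Fin n) F :=
  fun i j => if π j = i then 1 else 0

lemma permMat_mul (π σ : Equiv.Perm (Fin n)) :
    permMat F n π * permMat F n σ = permMat F n (π * σ) := by
  ext i j
  rw [Matrix.mul_apply]
  simp only [permMat, mul_ite, ite_mul, one_mul, mul_one, mul_zero, zero_mul]
  rw [Finset.sum_eq_single (σ j)]
  · rw [if_pos rfl, Equiv.Perm.mul_apply]
  · intro k _ hk
    simp [hk.symm]
  · simp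

lemma permMat_one : permMat F n 1 = 1 := by
  ext i j
  simp [permMat, Matrix.one_apply, eq_comm]

/-- The permutation matrix of `π`, as an element of `GL_n(F)`. -/
def permGL (π : Equiv.Perm (Fin n)) : GLn F n :=
  ⟨permMat F n π, permMat F n π⁻¹,
    by rw [permMat_mul, mul_inv_cancel, permMat_one],
    by rw [permMat_mul, inv_mul_cancel, permMat_one]⟩

/-- `f_i(t)`: identity matrix with an extra entry `t` in position `(r, c)`, as an
element of `GL_n(F)`. -/
def transvGL (r c : Fin n) (h : r ≠ c) (t : F) : GLn F n :=
  ⟨Matrix.transvection r c t, Matrix.transvection r c (-t),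
    by rw [Matrix.transvection_mul_transvection_same _ _ h, add_neg_cancel,
      Matrix.transvection_zero],
    by rw [Matrix.transvection_mul_transvection_same _ _ h, neg_add_cancel,
      Matrix.transvection_zero]⟩

variable (K : Type) [Field K]

/-- Matrix (row convention: row `gB` is `(gB) · T_{k+1}`) of the Hecke generator `T_{k+1}`
(paper indexing) on `ℂ[G/B]`:
`(gB)·T_i = g s_i B + ∑_{t ≠ 0} g f_i(t) B`, where `s_i` swaps (0-based) positions `k, k+1`
and `f_i(t)` has an extra entry `t` in (0-based) position `(k+1, k)`. -/
def genGB (k : ℕ) : Matrix (Cosets F n) (Cosets F n) K := fun C D =>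
  if h : k + 1 < n then
    (if (QuotientGroup.mk (C.out * permGL F n
          (Equiv.swap ⟨k, Nat.lt_of_succ_lt h⟩ ⟨k + 1, h⟩)) : Cosets F n) = D then 1 else 0)
    + ((Finset.univ.filter fun t : F => t ≠ 0 ∧
        (QuotientGroup.mk (C.out * transvGL F n ⟨k + 1, h⟩ ⟨k, Nat.lt_of_succ_lt h⟩
          (fun hc => by simp [Fin.ext_iff] at hc) t) : Cosets F n) = D).card : K)
  else 0

/-- Matrix of the product `T_k T_{k-1} ⋯ T_1` (paper indexing) on `ℂ[G/B]`. -/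
def prodGenGB : ℕ → Matrix (Cosets F n) (Cosets F n) K
  | 0 => 1
  | k + 1 => genGB F n K k * prodGenGB k

/-- The (0-based) row index of the leading entry (the pivot `1` of the distinguished coset
representative) in the first column of a representative of the coset `C`. -/
def pivotRow (C : Cosets F n) : ℕ :=
  sInf {i : ℕ | ∃ h : i < n,
    ((C.out : GLn F n) : Matrix (Fin n) (Fin n) F) ⟨i, h⟩
      ⟨0, Nat.lt_of_le_of_lt (Nat.zero_le i) h⟩ ≠ 0}

/-- Matrix of the weighting operator `X_{G/B}(q,x)`, where `q` is the cardinality of the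
field: `gB ↦ (x_i / q^{n-i}) gB` with `i` the row index of the leading 1 in the first
column of the distinguished representative of `gB`. -/
def XGB (x : Fin n → K) : Matrix (Cosets F n) (Cosets F n) K := fun C D =>
  if D = C then
    (if h : pivotRow F n C < n then
      x ⟨pivotRow F n C, h⟩ / (Fintype.card F : K) ^ (n - 1 - pivotRow F n C)
    else 0)
  else 0

/-- Matrix of the q-Tsetlin library operator
`T_{G/B}(q,x) = (∑_{i=1}^n T_{i-1} ⋯ T_1) ∘ X_{G/B}(q,x)` on `ℂ[G/B]` (row convention). -/
def TGB (x : Fin n → K) : Matrix (Cosets F n) (Cosets F n) K :=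
  (∑ k ∈ Finset.range n, prodGenGB F n K k) * XGB F n K x

/-- The coset `gB` belongs to the double coset `[π] = B⁻ π B`. -/
def inDC (π : Equiv.Perm (Fin n)) (C : Cosets F n) : Prop :=
  ∃ l b : GLn F n, lowerTri (l : Matrix (Fin n) (Fin n) F) ∧
    upperTri (b : Matrix (Fin n) (Fin n) F) ∧
    C = QuotientGroup.mk (l * permGL F n π * b)

/-- Number of coinversions `#{(i,j) : i < j, π_i < π_j}` of a permutation. -/
def coinvCount {m : ℕ} (π : Equiv.Perm (Fin m)) : ℕ :=
  (Finset.univ.filter fun p : Fin m × Fin m => p.1 < p.2 ∧ π p.1 < π p.2).card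

/-- Matrix (row convention) of the Hecke generator `T_{k+1}` (paper indexing) on `ℂS_n`. -/
def genMatP (m : ℕ) {R : Type} [Field R] (q : R) (k : ℕ) :
    Matrix (Equiv.Perm (Fin m)) (Equiv.Perm (Fin m)) R := fun π σ =>
  if h : k + 1 < m then
    if π ⟨k + 1, h⟩ < π ⟨k, Nat.lt_of_succ_lt h⟩ then
      (if σ = π * Equiv.swap ⟨k, Nat.lt_of_succ_lt h⟩ ⟨k + 1, h⟩ then q else 0)
    else
      (if σ = π * Equiv.swap ⟨k, Nat.lt_of_succ_lt h⟩ ⟨k + 1, h⟩ then 1 else 0)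
        + (if σ = π then q - 1 else 0)
  else 0

/-- Matrix of the product `T_k T_{k-1} ⋯ T_1` on permutations. -/
def prodGenP (m : ℕ) {R : Type} [Field R] (q : R) :
    ℕ → Matrix (Equiv.Perm (Fin m)) (Equiv.Perm (Fin m)) R
  | 0 => 1
  | k + 1 => genMatP m q k * prodGenP m q k

/-- Matrix of the weighting operator `X_{S_n}(q,x)`. -/
def XSnP (m : ℕ) {R : Type} [Field R] (q : R) (x : Fin m → R) :
    Matrix (Equiv.Perm (Fin m)) (Equiv.Perm (Fin m)) R := fun π σ =>
  if σ = π then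
    (if h : 0 < m then x (π ⟨0, h⟩) / q ^ (m - 1 - (π ⟨0, h⟩ : ℕ)) else 0)
  else 0

/-- Matrix of the q-Tsetlin library operator `T_{S_n}(q,x)` (row convention). -/
def TSnP (m : ℕ) {R : Type} [Field R] (q : R) (x : Fin m → R) :
    Matrix (Equiv.Perm (Fin m)) (Equiv.Perm (Fin m)) R :=
  (∑ k ∈ Finset.range m, prodGenP m q k) * XSnP m q x

/-- The q-integer `[a]_q = 1 + q + ⋯ + q^{a-1}`. -/
def qInt {R : Type} [Field R] (q : R) (a : ℕ) : R := ∑ r ∈ Finset.range a, q ^ r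

/-- `n_j = m_1 + ⋯ + m_j` (the first `j` parts of the composition, `j : ℕ`). -/
def nsum (l : ℕ) (m : Fin l → ℕ) (j : ℕ) : ℕ :=
  ∑ t ∈ Finset.univ.filter fun t : Fin l => (t : ℕ) < j, m t

/-- The (0-based) index `j` of the block `M_{j+1} = {n_j + 1, …, n_{j+1}}` containing the
0-based value `v` (paper value `v+1`). -/
def blockOf (l : ℕ) (m : Fin l → ℕ) (v : ℕ) : ℕ :=
  sInf {j : ℕ | v < nsum l m (j + 1)}

/-- Words of length `nn` in the alphabet `{1,…,l}` with `m j` occurrences of letter `j`. -/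
abbrev Words (nn l : ℕ) (m : Fin l → ℕ) : Type :=
  {w : Fin nn → Fin l // ∀ j, (Finset.univ.filter fun i => w i = j).card = m j}

/-- Matrix (row convention) of the Hecke generator `T_{k+1}` (paper indexing) on words. -/
def genMatW (nn l : ℕ) (m : Fin l → ℕ) {R : Type} [Field R] (q : R) (k : ℕ) :
    Matrix (Words nn l m) (Words nn l m) R := fun w u =>
  if h : k + 1 < nn then
    if w.1 ⟨k + 1, h⟩ ≤ w.1 ⟨k, Nat.lt_of_succ_lt h⟩ then
      (if u.1 = w.1 ∘ Equiv.swap ⟨k, Nat.lt_of_succ_lt h⟩ ⟨k + 1, h⟩ then q else 0)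
    else
      (if u.1 = w.1 ∘ Equiv.swap ⟨k, Nat.lt_of_succ_lt h⟩ ⟨k + 1, h⟩ then 1 else 0)
        + (if u = w then q - 1 else 0)
  else 0

/-- Matrix of the product `T_k T_{k-1} ⋯ T_1` on words. -/
def prodGenW (nn l : ℕ) (m : Fin l → ℕ) {R : Type} [Field R] (q : R) :
    ℕ → Matrix (Words nn l m) (Words nn l m) R
  | 0 => 1
  | k + 1 => genMatW nn l m q k * prodGenW nn l m q k

/-- Matrix of the weighting operator `X_{W_m}(q,x̄)`. -/
def XW (nn l : ℕ) (m : Fin l → ℕ) {R : Type} [Field R] (q : R) (xb : Fin l → R) :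
    Matrix (Words nn l m) (Words nn l m) R := fun w u =>
  if u = w then
    (if h : 0 < nn then
      xb (w.1 ⟨0, h⟩) /
        (q ^ (∑ t ∈ Finset.univ.filter fun t : Fin l => w.1 ⟨0, h⟩ < t, m t)
          * qInt q (m (w.1 ⟨0, h⟩)))
    else 0)
  else 0

/-- Matrix of the q-Tsetlin library operator `T_{W_m}(q,x̄)` (row convention). -/
def TWm (nn l : ℕ) (m : Fin l → ℕ) {R : Type} [Field R] (q : R) (xb : Fin l → R) :
    Matrix (Words nn l m) (Words nn l m) R :=
  (∑ k ∈ Finset.range nn, prodGenW nn l m q k) * XW nn l m q xb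

/-- The weights `x` are `m`-compatible: `y_i = x_i / q^{n-i}` is constant on blocks. -/
def mCompatible (nn l : ℕ) (m : Fin l → ℕ) (q : ℝ) (x : Fin nn → ℝ) : Prop :=
  ∀ i i' : Fin nn, blockOf l m (i : ℕ) = blockOf l m (i' : ℕ) →
    x i / q ^ (nn - 1 - (i : ℕ)) = x i' / q ^ (nn - 1 - (i' : ℕ))

/-- `Ψ` is a stationary distribution: a nonnegative row vector with entries summing to `1`
such that `Ψ · T = c Ψ`. -/
def IsStationary {P : Type} [Fintype P] (T : Matrix P P ℝ) (c : ℝ) (Ψ : P → ℝ) : Prop :=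
  (∀ p, 0 ≤ Ψ p) ∧ (∑ p, Ψ p = 1) ∧ Matrix.vecMul Ψ T = c • Ψ

/-! ### Generic lumping machinery -/

/-- `T` lumps to `U` along `f`. -/
def Lump {A B : Type} [Fintype A] [Fintype B] (f : A → B) (T : Matrix A A ℝ)
    (U : Matrix B B ℝ) : Prop :=
  ∀ φ : B → ℝ, T.mulVec (φ ∘ f) = (U.mulVec φ) ∘ f

/-- Irreducibility: every nonempty closed set of states is everything. -/
def Irr {A : Type} (T : Matrix A A ℝ) : Prop :=
  ∀ S : Set A, S.Nonempty → (∀ a ∈ S, ∀ b, 0 < T a b → b ∈ S) → ∀ a, a ∈ S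

/-- push-forward of a vector. -/
def push {A B : Type} [Fintype A] (f : A → B) (Ψ : A → ℝ) : B → ℝ := fun b =>
  ∑ a ∈ Finset.univ.filter fun a => f a = b, Ψ a

section generic
variable {A B : Type} [Fintype A] [Fintype B]

lemma Lump.zero (f : A → B) : Lump f 0 0 := by
  intro φ; ext a; simp

lemma Lump.one [DecidableEq A] [DecidableEq B] (f : A → B) : Lump f 1 1 := by
  intro φ; simp

lemma Lump.mul {f : A → B} {T T' : Matrix A A ℝ} {U U' : Matrix B B ℝ}
    (h : Lump f T U) (h' : Lump f T' U') : Lump f (T * T') (U * U') := by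
  intro φ
  rw [← Matrix.mulVec_mulVec, h', h, Matrix.mulVec_mulVec]

lemma Lump.sum {f : A → B} {T : ℕ → Matrix A A ℝ} {U : ℕ → Matrix B B ℝ}
    (h : ∀ k, Lump f (T k) (U k)) (s : Finset ℕ) :
    Lump f (∑ k ∈ s, T k) (∑ k ∈ s, U k) := by
  intro φ
  ext a
  simp only [Matrix.sum_mulVec, Finset.sum_apply, Function.comp]
  refine Finset.sum_congr rfl fun k _ => ?_
  exact congrFun (h k φ) a

lemma push_apply (f : A → B) (Ψ : A → ℝ) (b : B) [DecidablePred fun a => f a = b] :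
    push f Ψ b = ∑ a ∈ Finset.univ.filter (fun a => f a = b), Ψ a := by
  unfold push
  refine Finset.sum_congr ?_ fun _ _ => rfl
  ext a
  simp

lemma push_dot (f : A → B) (Ψ : A → ℝ) (φ : B → ℝ) :
    ∑ b, push f Ψ b * φ b = ∑ a, Ψ a * φ (f a) := by
  simp only [push, Finset.sum_mul]
  rw [← Finset.sum_fiberwise Finset.univ f]
  refine Finset.sum_congr rfl fun b _ => Finset.sum_congr rfl fun a ha => ?_
  rw [(Finset.mem_filter.mp ha).2]

lemma Lump.vecMul_push {f : A → B} {T : Matrix A A ℝ} {U : Matrix B B ℝ} (h : Lump f T U)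
    (Ψ : A → ℝ) : Matrix.vecMul (push f Ψ) U = push f (Matrix.vecMul Ψ T) := by
  ext b
  have key : ∀ φ : B → ℝ, ∑ b, Matrix.vecMul (push f Ψ) U b * φ b
      = ∑ b, push f (Matrix.vecMul Ψ T) b * φ b := by
    intro φ
    rw [push_dot]
    have e1 : ∑ b, Matrix.vecMul (push f Ψ) U b * φ b = ∑ b, push f Ψ b * U.mulVec φ b :=
      (Matrix.dotProduct_mulVec (push f Ψ) U φ).symm
    have e2 : ∑ a, Matrix.vecMul Ψ T a * φ (f a) = ∑ a, Ψ a * T.mulVec (φ ∘ f) a :=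
      (Matrix.dotProduct_mulVec Ψ T (φ ∘ f)).symm
    rw [e1, e2, push_dot, h φ]
    rfl
  have := key (Pi.single b 1)
  simpa [Pi.single_apply] using this

lemma Lump.stationary {f : A → B} {T : Matrix A A ℝ} {U : Matrix B B ℝ} (h : Lump f T U)
    {c : ℝ} {Ψ : A → ℝ} (hs : IsStationary T c Ψ) : IsStationary U c (push f Ψ) := by
  refine ⟨fun b => Finset.sum_nonneg fun a _ => hs.1 a, ?_, ?_⟩
  · have := push_dot f Ψ (fun _ => 1)
    simpa [hs.2.1] using this
  · rw [h.vecMul_push, hs.2.2]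
    ext b
    simp [push, Finset.mul_sum]

lemma Lump.apply_eq {f : A → B} {T : Matrix A A ℝ} {U : Matrix B B ℝ} (h : Lump f T U)
    (a : A) (b : B) : U (f a) b = ∑ a' ∈ Finset.univ.filter (fun a' => f a' = b), T a a' := by
  have := congrFun (h (Pi.single b 1)) a
  simp [Matrix.mulVec, dotProduct, Pi.single_apply] at this
  rw [← this, Finset.sum_filter]

lemma Lump.nonneg {f : A → B} {T : Matrix A A ℝ} {U : Matrix B B ℝ} (h : Lump f T U)
    (hf : Function.Surjective f) (hT : ∀ a b, 0 ≤ T a b) : ∀ a b, 0 ≤ U a b := by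
  intro b b'
  obtain ⟨a, rfl⟩ := hf b
  rw [h.apply_eq]
  exact Finset.sum_nonneg fun _ _ => hT _ _

lemma Lump.irr {f : A → B} {T : Matrix A A ℝ} {U : Matrix B B ℝ} (h : Lump f T U)
    (hf : Function.Surjective f) (hT : ∀ a b, 0 ≤ T a b) (hi : Irr T) : Irr U := by
  intro S hS hcl b
  obtain ⟨a, rfl⟩ := hf b
  refine hi (f ⁻¹' S) ?_ ?_ a
  · obtain ⟨s, hs⟩ := hS
    obtain ⟨a', rfl⟩ := hf s
    exact ⟨a', hs⟩
  · intro a ha a' hpos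
    refine hcl _ ha _ ?_
    rw [h.apply_eq]
    exact Finset.sum_pos' (fun _ _ => hT _ _) ⟨a', by simp, hpos⟩

lemma pos_of_irr {T : Matrix A A ℝ} (hT : ∀ a b, 0 ≤ T a b) (hi : Irr T) {c : ℝ} (hc : 0 < c)
    {Ψ : A → ℝ} (h0 : ∀ a, 0 ≤ Ψ a) (he : Matrix.vecMul Ψ T = c • Ψ) {a₀ : A}
    (ha : 0 < Ψ a₀) : ∀ a, 0 < Ψ a := by
  refine hi {a | 0 < Ψ a} ⟨a₀, ha⟩ ?_
  intro a ha b hab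
  have h1 : Matrix.vecMul Ψ T b = c * Ψ b := by rw [he]; rfl
  have h2 : 0 < Matrix.vecMul Ψ T b :=
    Finset.sum_pos' (fun i _ => mul_nonneg (h0 i) (hT i b)) ⟨a, by simp, mul_pos ha hab⟩
  rw [h1] at h2
  exact pos_of_mul_pos_right h2 hc.le

lemma stationary_unique {T : Matrix A A ℝ} (hT : ∀ a b, 0 ≤ T a b) (hi : Irr T) {c : ℝ}
    (hc : 0 < c) {Ψ Ψ' : A → ℝ} (h : IsStationary T c Ψ) (h' : IsStationary T c Ψ') :
    Ψ = Ψ' := by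
  have hpos : ∀ Φ, IsStationary T c Φ → ∀ a, 0 < Φ a := by
    intro Φ hΦ
    have : ∃ a, 0 < Φ a := by
      by_contra hcon
      push Not at hcon
      have := Finset.sum_nonpos (s := Finset.univ) (f := Φ) fun a _ => hcon a
      rw [hΦ.2.1] at this
      linarith
    obtain ⟨a₀, ha₀⟩ := this
    exact pos_of_irr hT hi hc hΦ.1 hΦ.2.2 ha₀
  have hne : (Finset.univ : Finset A).Nonempty := by
    rw [Finset.univ_nonempty_iff]
    by_contra hcon
    rw [not_nonempty_iff] at hcon
    have := h.2.1
    simp at this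
  obtain ⟨p, -, hp⟩ := Finset.exists_min_image Finset.univ (fun a => Ψ a / Ψ' a) hne
  set r := Ψ p / Ψ' p with hr
  have hd : ∀ a, 0 ≤ (Ψ - r • Ψ') a := by
    intro a
    have h1 := hp a (Finset.mem_univ a)
    rw [le_div_iff₀ (hpos Ψ' h' a)] at h1
    simpa using h1
  have hde : Matrix.vecMul (Ψ - r • Ψ') T = c • (Ψ - r • Ψ') := by
    rw [Matrix.sub_vecMul, Matrix.smul_vecMul, h.2.2, h'.2.2, smul_sub, smul_comm]
  have hz : ∀ a, (Ψ - r • Ψ') a = 0 := by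
    intro a
    by_contra hcon
    have hlt := lt_of_le_of_ne (hd a) (Ne.symm hcon)
    have := pos_of_irr hT hi hc hd hde hlt p
    have hp' := (hpos Ψ' h' p).ne'
    simp [hr, div_mul_cancel₀ _ hp'] at this
  have hz' : ∀ a, Ψ a = r * Ψ' a := by
    intro a
    have := hz a
    simp at this
    linarith
  have hr1 : r = 1 := by
    have := h.2.1
    simp_rw [hz'] at this
    rw [← Finset.mul_sum, h'.2.1] at this
    linarith
  ext a
  rw [hz' a, hr1, one_mul]

end generic

/-! ### Matrix lemmas -/

section matrices
variable {F n}

lemma permMat_mul_apply (π : Equiv.Perm (Fin n)) (M : Matrix (Fin n) (Fin n) F) (i j : Fin n) :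
    (permMat F n π * M) i j = M (π⁻¹ i) j := by
  rw [Matrix.mul_apply, Finset.sum_eq_single (π⁻¹ i)]
  · simp [permMat]
  · intro k _ hk
    have : π k ≠ i := by
      rintro rfl
      simp at hk
    simp [permMat, this]
  · simp

lemma mul_permMat_apply (π : Equiv.Perm (Fin n)) (M : Matrix (Fin n) (Fin n) F) (i j : Fin n) :
    (M * permMat F n π) i j = M i (π j) := by
  rw [Matrix.mul_apply, Finset.sum_eq_single (π j)]
  · simp [permMat]
  · intro k _ hk
    simp [permMat, hk.symm]
  · simp

lemma permGL_mul (π σ : Equiv.Perm (Fin n)) :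
    permGL F n (π * σ) = permGL F n π * permGL F n σ := by
  ext i j
  exact (congrFun (congrFun (permMat_mul F n π σ) i) j).symm

lemma permGL_one : permGL F n 1 = 1 := by
  ext i j
  exact congrFun (congrFun (permMat_one F n) i) j

lemma permGL_inv (π : Equiv.Perm (Fin n)) :
    permGL F n π⁻¹ = (permGL F n π)⁻¹ := by
  apply eq_inv_of_mul_eq_one_left
  rw [← permGL_mul, inv_mul_cancel, permGL_one]

lemma conj_apply (π : Equiv.Perm (Fin n)) (g : GLn F n) (i j : Fin n) :
    ((permGL F n π)⁻¹ * g * permGL F n π : GLn F n) i j = g (π i) (π j) := by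
  rw [← permGL_inv]
  show (permMat F n π⁻¹ * (g : Matrix (Fin n) (Fin n) F) * permMat F n π) i j = _
  rw [mul_permMat_apply, permMat_mul_apply, inv_inv]

lemma upper_diag_ne {g : GLn F n} (h : upperTri (g : Matrix (Fin n) (Fin n) F)) (i : Fin n) :
    (g : Matrix (Fin n) (Fin n) F) i i ≠ 0 := by
  have hdet : (g : Matrix (Fin n) (Fin n) F).det ≠ 0 :=
    ((Matrix.isUnit_iff_isUnit_det _).mp g.isUnit).ne_zero
  rw [Matrix.det_of_isUpperTriangular (M := (g : Matrix (Fin n) (Fin n) F)) h] at hdet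
  exact Finset.prod_ne_zero_iff.mp hdet i (Finset.mem_univ i)

lemma lower_diag_ne {g : GLn F n} (h : lowerTri (g : Matrix (Fin n) (Fin n) F)) (i : Fin n) :
    (g : Matrix (Fin n) (Fin n) F) i i ≠ 0 := by
  have hdet : (g : Matrix (Fin n) (Fin n) F).det ≠ 0 :=
    ((Matrix.isUnit_iff_isUnit_det _).mp g.isUnit).ne_zero
  rw [Matrix.det_of_isLowerTriangular (M := (g : Matrix (Fin n) (Fin n) F)) ?_] at hdet
  · exact Finset.prod_ne_zero_iff.mp hdet i (Finset.mem_univ i)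
  · intro i j hij
    exact h i j hij

lemma lower_mul {g h : GLn F n} (hg : lowerTri (g : Matrix (Fin n) (Fin n) F))
    (hh : lowerTri (h : Matrix (Fin n) (Fin n) F)) :
    lowerTri ((g * h : GLn F n) : Matrix (Fin n) (Fin n) F) := by
  intro i j hij
  show ((g : Matrix (Fin n) (Fin n) F) * (h : Matrix (Fin n) (Fin n) F)) i j = 0
  rw [Matrix.mul_apply]
  refine Finset.sum_eq_zero fun k _ => ?_
  rcases lt_or_ge i k with hk | hk
  · rw [hg i k hk, zero_mul]
  · rw [hh k j (lt_of_le_of_lt hk hij), mul_zero]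

lemma lower_inv {g : GLn F n} (hg : lowerTri (g : Matrix (Fin n) (Fin n) F)) :
    lowerTri ((g⁻¹ : GLn F n) : Matrix (Fin n) (Fin n) F) := by
  have hdet : IsUnit ((g : Matrix (Fin n) (Fin n) F).det) :=
    (Matrix.isUnit_iff_isUnit_det _).mp g.isUnit
  have hinv : Invertible (g : Matrix (Fin n) (Fin n) F) :=
    Matrix.invertibleOfIsUnitDet _ hdet
  have h1 : (g : Matrix (Fin n) (Fin n) F).BlockTriangular (OrderDual.toDual : Fin n → (Fin n)ᵒᵈ) := by
    intro i j hij
    exact hg i j hij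
  have h2 : ((g : Matrix (Fin n) (Fin n) F)⁻¹).BlockTriangular
      (OrderDual.toDual : Fin n → (Fin n)ᵒᵈ) :=
    Matrix.blockTriangular_inv_of_blockTriangular h1
  rw [show ((g⁻¹ : GLn F n) : Matrix (Fin n) (Fin n) F)
        = (g : Matrix (Fin n) (Fin n) F)⁻¹ from Matrix.coe_units_inv g]
  intro i j hij
  exact h2 hij

lemma transv_apply (r c : Fin n) (h : r ≠ c) (t : F) (i j : Fin n) :
    (transvGL F n r c h t) i j = (if i = j then 1 else 0) + (if r = i ∧ c = j then t else 0) := by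
  show Matrix.transvection r c t i j = _
  simp [Matrix.transvection, Matrix.one_apply, Matrix.single_apply]

lemma transv_lower (r c : Fin n) (h : r ≠ c) (hrc : c < r) (t : F) :
    lowerTri (transvGL F n r c h t : Matrix (Fin n) (Fin n) F) := by
  intro i j hij
  rw [transv_apply, if_neg hij.ne, if_neg, add_zero]
  rintro ⟨rfl, rfl⟩
  exact absurd hij hrc.asymm

lemma transv_upper (r c : Fin n) (h : r ≠ c) (hrc : r < c) (t : F) :
    upperTri (transvGL F n r c h t : Matrix (Fin n) (Fin n) F) := by
  intro i j hij
  rw [transv_apply, if_neg hij.ne', if_neg, add_zero]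
  rintro ⟨rfl, rfl⟩
  exact absurd hij hrc.asymm

/-- conjugation of a transvection by a permutation. -/
lemma perm_mul_transv (π : Equiv.Perm (Fin n)) (r c : Fin n) (h : r ≠ c) (t : F) :
    permGL F n π * transvGL F n r c h t
      = transvGL F n (π r) (π c) (fun e => h (π.injective e)) t * permGL F n π := by
  have key : transvGL F n r c h t = (permGL F n π)⁻¹ *
      transvGL F n (π r) (π c) (fun e => h (π.injective e)) t * permGL F n π := by
    ext i j
    rw [conj_apply, transv_apply, transv_apply]
    simp
  rw [key]
  group

lemma transv_mul_same (r c : Fin n) (h : r ≠ c) (t s : F) :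
    transvGL F n r c h t * transvGL F n r c h s = transvGL F n r c h (t + s) := by
  ext i j
  exact congrFun (congrFun (Matrix.transvection_mul_transvection_same r c h t s) i) j

lemma transv_zero (r c : Fin n) (h : r ≠ c) : transvGL F n r c h (0 : F) = 1 := by
  ext i j
  exact congrFun (congrFun (Matrix.transvection_zero r c) i) j

lemma transv_inv (r c : Fin n) (h : r ≠ c) (t : F) :
    (transvGL F n r c h t)⁻¹ = transvGL F n r c h (-t) := by
  symm
  apply eq_inv_of_mul_eq_one_left
  rw [transv_mul_same, neg_add_cancel, transv_zero]

lemma swap_adj {a b i j : Fin n} (hab : (a : ℕ) + 1 = b) (hij : j < i)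
    (h : ¬ Equiv.swap a b j < Equiv.swap a b i) : j = a ∧ i = b := by
  simp only [Equiv.swap_apply_def] at h
  simp only [Fin.lt_def, Fin.ext_iff] at *
  split_ifs at h <;> omega

lemma swapGL_inv (a b : Fin n) :
    (permGL F n (Equiv.swap a b))⁻¹ = permGL F n (Equiv.swap a b) := by
  rw [← permGL_inv, Equiv.swap_inv]

lemma swap_conj_upper {a b : Fin n} (hab : (a : ℕ) + 1 = b) {g : GLn F n}
    (hg : upperTri (g : Matrix (Fin n) (Fin n) F)) (h0 : g a b = 0) :
    upperTri ((permGL F n (Equiv.swap a b))⁻¹ * g * permGL F n (Equiv.swap a b) : GLn F n).1 := by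
  intro i j hij
  rw [conj_apply]
  by_cases h : Equiv.swap a b j < Equiv.swap a b i
  · exact hg _ _ h
  · obtain ⟨rfl, rfl⟩ := swap_adj hab hij h
    simpa using h0

lemma mk_eq {g h : GLn F n} (hu : upperTri ((g⁻¹ * h : GLn F n) : Matrix (Fin n) (Fin n) F)) :
    (QuotientGroup.mk g : Cosets F n) = QuotientGroup.mk h :=
  QuotientGroup.eq.mpr hu

lemma mk_mul_upper (g : GLn F n) {b : GLn F n} (hb : upperTri (b : Matrix (Fin n) (Fin n) F)) :
    (QuotientGroup.mk (g * b) : Cosets F n) = QuotientGroup.mk g := by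
  symm
  apply mk_eq
  rwa [inv_mul_cancel_left]

lemma upper_mul {g h : GLn F n} (hg : upperTri (g : Matrix (Fin n) (Fin n) F))
    (hh : upperTri (h : Matrix (Fin n) (Fin n) F)) :
    upperTri ((g * h : GLn F n) : Matrix (Fin n) (Fin n) F) :=
  (Bsub F n).mul_mem hg hh

/-- Moving an upper triangular matrix through `e(u) s`. -/
lemma mk_upper_move {a b : Fin n} (hab : (a : ℕ) + 1 = b) (hne : a ≠ b) (g : GLn F n)
    {h : GLn F n} (hh : upperTri (h : Matrix (Fin n) (Fin n) F)) (u : F) :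
    (QuotientGroup.mk (g * h * transvGL F n a b hne u * permGL F n (Equiv.swap a b)) : Cosets F n)
      = QuotientGroup.mk (g * transvGL F n a b hne ((h a b + h a a * u) / h b b)
          * permGL F n (Equiv.swap a b)) := by
  set v := (h a b + h a a * u) / h b b with hv
  have hlt : a < b := by rw [Fin.lt_def]; omega
  symm
  apply mk_eq
  have e : (g * transvGL F n a b hne v * permGL F n (Equiv.swap a b))⁻¹ *
      (g * h * transvGL F n a b hne u * permGL F n (Equiv.swap a b))
      = (permGL F n (Equiv.swap a b))⁻¹ * (transvGL F n a b hne (-v) * h * transvGL F n a b hne u)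
        * permGL F n (Equiv.swap a b) := by
    rw [← transv_inv]
    group
  rw [e]
  apply swap_conj_upper hab
  · exact upper_mul (upper_mul (transv_upper _ _ _ hlt _) hh) (transv_upper _ _ _ hlt _)
  · show (Matrix.transvection a b (-v) * (h : Matrix (Fin n) (Fin n) F)
      * Matrix.transvection a b u) a b = 0
    rw [Matrix.mul_transvection_apply_same, Matrix.transvection_mul_apply_same,
      Matrix.transvection_mul_apply_same, hh b a hlt, hv]
    have := upper_diag_ne hh b
    field_simp
    ring

/-- `f(t) B = e(1/t) s B`. -/
lemma mk_lower_transv {a b : Fin n} (hab : (a : ℕ) + 1 = b) (hne : a ≠ b) (hne' : b ≠ a)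
    (g : GLn F n) {t : F} (ht : t ≠ 0) :
    (QuotientGroup.mk (g * transvGL F n b a hne' t) : Cosets F n)
      = QuotientGroup.mk (g * transvGL F n a b hne t⁻¹ * permGL F n (Equiv.swap a b)) := by
  symm
  apply mk_eq
  have e : (g * transvGL F n a b hne t⁻¹ * permGL F n (Equiv.swap a b))⁻¹ *
      (g * transvGL F n b a hne' t)
      = permGL F n (Equiv.swap a b) * (transvGL F n a b hne (-t⁻¹) * transvGL F n b a hne' t) := by
    rw [← transv_inv, mul_inv_rev, mul_inv_rev, swapGL_inv]
    group
  rw [e]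
  intro i j hij
  show (permMat F n (Equiv.swap a b) * (Matrix.transvection a b (-t⁻¹)
    * Matrix.transvection b a t)) i j = 0
  rw [permMat_mul_apply, Equiv.swap_inv]
  have hM : Matrix.transvection a b (-t⁻¹) * Matrix.transvection b a t
      = 1 + Matrix.single b a t + Matrix.single a b (-t⁻¹) + Matrix.single a a (-1 : F) := by
    simp only [Matrix.transvection, add_mul, mul_add, one_mul, mul_one,
      Matrix.single_mul_single_same]
    rw [neg_mul, inv_mul_cancel₀ ht]
    abel
  rw [hM]
  simp only [Matrix.add_apply, Matrix.one_apply, Matrix.single_apply, Equiv.swap_apply_def]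
  rw [Fin.lt_def] at hij
  by_cases h1 : i = a
  · subst h1
    have : j ≠ b := by rintro rfl; omega
    have : j ≠ i := by rintro rfl; omega
    grind
  · by_cases h2 : i = b
    · subst h2
      by_cases h3 : j = a
      · subst h3; simp [hne']
      · grind
    · grind

end matrices

/-! ### Bruhat decomposition and lumping to permutations -/

section bruhat
variable {F n}

lemma sum_upper_move {a b : Fin n} (hab : (a : ℕ) + 1 = b) (hne : a ≠ b) (g : GLn F n)
    {h : GLn F n} (hh : upperTri (h : Matrix (Fin n) (Fin n) F)) (φ : Cosets F n → ℝ) :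
    ∑ u : F, φ (QuotientGroup.mk (g * h * transvGL F n a b hne u * permGL F n (Equiv.swap a b)))
      = ∑ u : F, φ (QuotientGroup.mk (g * transvGL F n a b hne u *
          permGL F n (Equiv.swap a b))) := by
  have ha := upper_diag_ne hh a
  have hb := upper_diag_ne hh b
  refine Fintype.sum_bijective (fun u : F => (h a b + h a a * u) / h b b) ?_ _ _ ?_
  · apply (Finite.injective_iff_bijective).mp
    intro u v huv
    simp only at huv
    rw [div_left_inj' hb] at huv
    exact mul_left_cancel₀ ha (add_left_cancel huv)
  · intro u
    rw [mk_upper_move hab hne g hh u]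

lemma genGB_mulVec {k : ℕ} (h : k + 1 < n) (hne : (⟨k, Nat.lt_of_succ_lt h⟩ : Fin n) ≠ ⟨k + 1, h⟩)
    (g : GLn F n) (φ : Cosets F n → ℝ) :
    (genGB F n ℝ k).mulVec φ (QuotientGroup.mk g) =
      ∑ u : F, φ (QuotientGroup.mk (g * transvGL F n ⟨k, Nat.lt_of_succ_lt h⟩ ⟨k + 1, h⟩ hne u *
          permGL F n (Equiv.swap ⟨k, Nat.lt_of_succ_lt h⟩ ⟨k + 1, h⟩))) := by
  obtain ⟨b, hb⟩ := QuotientGroup.mk_out_eq_mul (Bsub F n) g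
  rw [← sum_upper_move rfl hne g b.2, ← hb]
  set o := (QuotientGroup.mk g : Cosets F n).out with ho
  simp only [Matrix.mulVec, dotProduct, genGB, dif_pos h, ← ho, add_mul, Finset.sum_add_distrib,
    ite_mul, one_mul, zero_mul, Finset.sum_ite_eq, Finset.mem_univ, if_true]
  rw [← Finset.add_sum_erase Finset.univ _ (Finset.mem_univ (0 : F)), transv_zero, mul_one]
  congr 1
  have e1 : ∀ D : Cosets F n, ((Finset.univ.filter fun t : F => t ≠ 0 ∧
        (QuotientGroup.mk (o * transvGL F n ⟨k + 1, h⟩ ⟨k, Nat.lt_of_succ_lt h⟩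
          hne.symm t) : Cosets F n) = D).card : ℝ) * φ D
      = ∑ t ∈ Finset.univ.filter (fun t : F => t ≠ 0), if (QuotientGroup.mk (o * transvGL F n
        ⟨k + 1, h⟩ ⟨k, Nat.lt_of_succ_lt h⟩ hne.symm t) : Cosets F n) = D then φ D else 0 := by
    intro D
    rw [← Finset.sum_filter, Finset.filter_filter, Finset.sum_const, nsmul_eq_mul]
  rw [Finset.sum_congr rfl fun D _ => e1 D, Finset.sum_comm]
  simp only [Finset.sum_ite_eq, Finset.mem_univ, if_true]
  refine Finset.sum_bij' (fun t _ => t⁻¹) (fun t _ => t⁻¹) ?_ ?_ ?_ ?_ ?_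
  · intro t ht; simpa using ht
  · intro t ht; simpa using ht
  · intro t ht; simp
  · intro t ht; simp
  · intro t ht
    rw [mk_lower_transv rfl hne hne.symm o (by simpa using ht)]

lemma inDC_unique {π σ : Equiv.Perm (Fin n)} {C : Cosets F n} (h1 : inDC F n π C)
    (h2 : inDC F n σ C) : π = σ := by
  obtain ⟨l, b, hl, hb, rfl⟩ := h1
  obtain ⟨l', b', hl', hb', he⟩ := h2
  have hu : upperTri ((l * permGL F n π * b)⁻¹ * (l' * permGL F n σ * b') : GLn F n).1 :=
    QuotientGroup.eq.mp he
  set c := (l * permGL F n π * b)⁻¹ * (l' * permGL F n σ * b') with hc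
  set d := b * c * b'⁻¹ with hd
  set e := l⁻¹ * l' with he'
  have hdu : upperTri (d : Matrix (Fin n) (Fin n) F) :=
    upper_mul (upper_mul hb hu) ((Bsub F n).inv_mem hb')
  have hel : lowerTri (e : Matrix (Fin n) (Fin n) F) := lower_mul (lower_inv hl) hl'
  have hde : permGL F n π * d = e * permGL F n σ := by
    rw [hd, hc, he']; group
  have hent : ∀ i j, (d : Matrix (Fin n) (Fin n) F) (π⁻¹ i) j
      = (e : Matrix (Fin n) (Fin n) F) i (σ j) := by
    intro i j
    have h3 : (permMat F n π * (d : Matrix (Fin n) (Fin n) F)) i j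
        = ((e : Matrix (Fin n) (Fin n) F) * permMat F n σ) i j :=
      congrArg (fun g : GLn F n => (g : Matrix (Fin n) (Fin n) F) i j) hde
    rwa [permMat_mul_apply, mul_permMat_apply] at h3
  have hle : ∀ j, σ j ≤ π j := by
    intro j
    by_contra hcon
    push Not at hcon
    have := hent (π j) j
    rw [hel _ _ hcon] at this
    simp at this
    exact upper_diag_ne hdu j this
  have hsum : ∑ j, ((σ j : Fin n) : ℕ) = ∑ j, ((π j : Fin n) : ℕ) := by
    rw [Equiv.sum_comp σ (fun j : Fin n => (j : ℕ)), Equiv.sum_comp π (fun j : Fin n => (j : ℕ))]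
  have := (Finset.sum_eq_sum_iff_of_le (fun j _ => (Fin.le_def.mp (hle j)))).mp hsum
  ext j
  exact (this j (Finset.mem_univ j)).symm

lemma dc_step {a b : Fin n} (hab : (a : ℕ) + 1 = b) (hne : a ≠ b) (π : Equiv.Perm (Fin n))
    {l : GLn F n} (hl : lowerTri (l : Matrix (Fin n) (Fin n) F)) (u : F) :
    inDC F n (if u = 0 ∨ π b < π a then π * Equiv.swap a b else π)
      (QuotientGroup.mk (l * permGL F n π * transvGL F n a b hne u
        * permGL F n (Equiv.swap a b))) := by
  have h1 : upperTri ((1 : GLn F n) : Matrix (Fin n) (Fin n) F) := (Bsub F n).one_mem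
  by_cases hu : u = 0
  · subst hu
    simp only [true_or, if_true]
    refine ⟨l, 1, hl, h1, ?_⟩
    rw [transv_zero, permGL_mul, mul_one, mul_one, mul_assoc]
  by_cases hd : π b < π a
  · simp only [hd, or_true, if_true]
    refine ⟨l * transvGL F n (π a) (π b) (fun e => hne (π.injective e)) u, 1,
      lower_mul hl (transv_lower _ _ _ hd _), h1, ?_⟩
    rw [permGL_mul, mul_one, mul_assoc l, perm_mul_transv]
    simp only [mul_assoc]
  · simp only [hu, hd, or_self, if_false]
    have hd' : π a < π b := lt_of_le_of_ne (not_lt.mp hd) (fun e => hne (π.injective e))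
    refine ⟨l * transvGL F n (π b) (π a) (fun e => hne (π.injective e.symm)) u⁻¹, 1,
      lower_mul hl (transv_lower _ _ _ hd' _), h1, ?_⟩
    have := mk_lower_transv hab hne hne.symm (l * permGL F n π) (inv_ne_zero hu)
    rw [inv_inv] at this
    rw [← this, mul_one, mul_assoc l, perm_mul_transv]
    simp only [mul_assoc]

lemma adj_perm_closed (H : Submonoid (Equiv.Perm (Fin n)))
    (hs : ∀ k (h : k + 1 < n), Equiv.swap (⟨k, Nat.lt_of_succ_lt h⟩ : Fin n) ⟨k + 1, h⟩ ∈ H)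
    (π : Equiv.Perm (Fin n)) : π ∈ H := by
  cases n with
  | zero =>
    have : π = 1 := Subsingleton.elim _ _
    rw [this]; exact H.one_mem
  | succ n =>
    have h1 : Submonoid.closure (Set.range fun i : Fin n ↦ Equiv.swap i.castSucc i.succ) ≤ H := by
      rw [Submonoid.closure_le]
      rintro _ ⟨i, rfl⟩
      exact hs i.1 (Nat.succ_lt_succ i.2)
    rw [Equiv.Perm.mclosure_swap_castSucc_succ] at h1
    exact h1 trivial

/-- `GL_n` is generated by `B` and the adjacent transpositions. -/
lemma gen_top (H : Submonoid (GLn F n)) (hB : ∀ b ∈ Bsub F n, b ∈ H)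
    (hs : ∀ k (h : k + 1 < n),
      permGL F n (Equiv.swap (⟨k, Nat.lt_of_succ_lt h⟩ : Fin n) ⟨k + 1, h⟩) ∈ H)
    (g : GLn F n) : g ∈ H := by
  have hperm : ∀ π, permGL F n π ∈ H := by
    intro π
    let f : Equiv.Perm (Fin n) →* GLn F n :=
      { toFun := permGL F n, map_one' := permGL_one, map_mul' := permGL_mul }
    exact adj_perm_closed (H.comap f) hs π
  have key : ∀ M : Matrix (Fin n) (Fin n) F, M.det ≠ 0 →
      ∀ g : GLn F n, (g : Matrix (Fin n) (Fin n) F) = M → g ∈ H := by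
    intro M hM
    refine Matrix.diagonal_transvection_induction_of_det_ne_zero
      (fun M => ∀ g : GLn F n, (g : Matrix (Fin n) (Fin n) F) = M → g ∈ H) M hM ?_ ?_ ?_
    · intro D _ g hg
      apply hB
      intro i j hij
      rw [hg, Matrix.diagonal_apply_ne _ hij.ne']
    · rintro ⟨i, j, hij, c⟩ g hg
      have hg' : g = transvGL F n i j hij c := Units.ext hg
      rw [hg']
      rcases lt_or_gt_of_ne hij with h | h
      · exact hB _ (transv_upper _ _ _ h _)
      · have e := perm_mul_transv (Equiv.swap i j) j i hij.symm c
        have e' : transvGL F n i j hij c = permGL F n (Equiv.swap i j) *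
            transvGL F n j i hij.symm c * (permGL F n (Equiv.swap i j))⁻¹ := by
          rw [e, mul_inv_cancel_right]
          congr 1 <;> simp
        rw [e', ← permGL_inv]
        exact H.mul_mem (H.mul_mem (hperm _) (hB _ (transv_upper _ _ _ h _))) (hperm _)
    · intro A B hA hB' ihA ihB g hg
      have : g = Matrix.GeneralLinearGroup.mkOfDetNeZero A hA *
          Matrix.GeneralLinearGroup.mkOfDetNeZero B hB' := Units.ext hg
      rw [this]
      exact H.mul_mem (ihA _ rfl) (ihB _ rfl)
  exact key _ ((Matrix.isUnit_iff_isUnit_det _).mp g.isUnit).ne_zero g rfl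

lemma gen_closed (S : Set (GLn F n)) (hB : ∀ g ∈ S, ∀ b ∈ Bsub F n, g * b ∈ S)
    (hs : ∀ g ∈ S, ∀ k (h : k + 1 < n),
      g * permGL F n (Equiv.swap (⟨k, Nat.lt_of_succ_lt h⟩ : Fin n) ⟨k + 1, h⟩) ∈ S)
    {g : GLn F n} (hg : g ∈ S) (h : GLn F n) : h ∈ S := by
  let H : Submonoid (GLn F n) :=
    { carrier := {h | ∀ g ∈ S, g * h ∈ S}
      one_mem' := fun g hg => by rwa [mul_one]
      mul_mem' := fun {a b} ha hb g hg => by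
        rw [← mul_assoc]; exact hb _ (ha _ hg) }
  have := gen_top H (fun b hb g hg => hB g hg b hb) (fun k h g hg => hs g hg k h) (g⁻¹ * h) g hg
  rwa [mul_inv_cancel_left] at this

lemma inDC_exists (C : Cosets F n) : ∃ π, inDC F n π C := by
  obtain ⟨g, rfl⟩ := QuotientGroup.mk_surjective C
  have h1 : upperTri ((1 : GLn F n) : Matrix (Fin n) (Fin n) F) := (Bsub F n).one_mem
  have hl1 : lowerTri ((1 : GLn F n) : Matrix (Fin n) (Fin n) F) := by
    intro i j hij
    simp [hij.ne]
  refine gen_closed {g | ∃ π, inDC F n π (QuotientGroup.mk g)} ?_ ?_ (g := 1) ?_ g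
  · rintro g ⟨π, hπ⟩ b hb
    refine ⟨π, ?_⟩
    rwa [mk_mul_upper g hb]
  · rintro g ⟨π, l, b, hl, hb, he⟩ k h
    have hne : (⟨k, Nat.lt_of_succ_lt h⟩ : Fin n) ≠ ⟨k + 1, h⟩ := by simp [Fin.ext_iff]
    have hu : upperTri ((l * permGL F n π * b)⁻¹ * g : GLn F n).1 :=
      QuotientGroup.eq.mp he.symm
    set c := (l * permGL F n π * b)⁻¹ * g with hc
    have hg : g = l * permGL F n π * (b * c) := by rw [hc]; group
    have := mk_upper_move (F := F) (n := n) rfl hne (l * permGL F n π) (upper_mul hb hu) 0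
    rw [transv_zero, mul_one, ← hg] at this
    have h5 := dc_step (F := F) rfl hne π hl (((b * c : GLn F n) ⟨k, Nat.lt_of_succ_lt h⟩ ⟨k + 1, h⟩
      + (b * c : GLn F n) ⟨k, Nat.lt_of_succ_lt h⟩ ⟨k, Nat.lt_of_succ_lt h⟩ * 0)
      / (b * c : GLn F n) ⟨k + 1, h⟩ ⟨k + 1, h⟩)
    rw [← this] at h5
    exact ⟨_, h5⟩
  · refine ⟨1, 1, 1, hl1, h1, ?_⟩
    rw [permGL_one, mul_one, mul_one]

/-- The permutation indexing the double coset of `C`. -/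
def bru (C : Cosets F n) : Equiv.Perm (Fin n) := (inDC_exists C).choose

lemma bru_spec (C : Cosets F n) : inDC F n (bru C) C := (inDC_exists C).choose_spec

lemma bru_eq {C : Cosets F n} {π : Equiv.Perm (Fin n)} (h : inDC F n π C) : bru C = π :=
  inDC_unique (bru_spec C) h

lemma inDC_iff (C : Cosets F n) (π : Equiv.Perm (Fin n)) : inDC F n π C ↔ bru C = π :=
  ⟨bru_eq, fun h => h ▸ bru_spec C⟩

lemma bru_surj : Function.Surjective (bru : Cosets F n → Equiv.Perm (Fin n)) := by
  intro π
  refine ⟨QuotientGroup.mk (permGL F n π), bru_eq ⟨1, 1, ?_, (Bsub F n).one_mem, ?_⟩⟩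
  · intro i j hij
    simp [hij.ne]
  · rw [one_mul, mul_one]

lemma bru_rep (C : Cosets F n) : ∃ l : GLn F n, lowerTri (l : Matrix (Fin n) (Fin n) F) ∧
    C = QuotientGroup.mk (l * permGL F n (bru C)) := by
  obtain ⟨l, b, hl, hb, he⟩ := bru_spec C
  exact ⟨l, hl, by rw [← mk_mul_upper _ hb]; exact he⟩

lemma genMatP_mulVec {k : ℕ} (h : k + 1 < n) (q : ℝ) (φ : Equiv.Perm (Fin n) → ℝ)
    (π : Equiv.Perm (Fin n)) :
    (genMatP n q k).mulVec φ π =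
      if π ⟨k + 1, h⟩ < π ⟨k, Nat.lt_of_succ_lt h⟩ then
        q * φ (π * Equiv.swap ⟨k, Nat.lt_of_succ_lt h⟩ ⟨k + 1, h⟩)
      else φ (π * Equiv.swap ⟨k, Nat.lt_of_succ_lt h⟩ ⟨k + 1, h⟩) + (q - 1) * φ π := by
  simp only [Matrix.mulVec, dotProduct, genMatP, dif_pos h]
  split_ifs
  · simp
  · simp [add_mul, Finset.sum_add_distrib]

lemma lump_gen (k : ℕ) :
    Lump (bru : Cosets F n → Equiv.Perm (Fin n)) (genGB F n ℝ k) (genMatP n (Fintype.card F : ℝ) k) := by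
  by_cases h : k + 1 < n
  swap
  · have e1 : genGB F n ℝ k = 0 := by ext C D; simp [genGB, h]
    have e2 : genMatP n (Fintype.card F : ℝ) k = 0 := by ext C D; simp [genMatP, h]
    rw [e1, e2]
    exact Lump.zero _
  intro φ
  ext C
  have hne : (⟨k, Nat.lt_of_succ_lt h⟩ : Fin n) ≠ ⟨k + 1, h⟩ := by simp [Fin.ext_iff]
  obtain ⟨l, hl, hC⟩ := bru_rep C
  rw [Function.comp, genMatP_mulVec h]
  set π := bru C with hπ
  rw [hC, genGB_mulVec h hne]
  have e : ∀ u : F, (φ ∘ bru) (QuotientGroup.mk (l * permGL F n π *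
      transvGL F n ⟨k, Nat.lt_of_succ_lt h⟩ ⟨k + 1, h⟩ hne u *
          permGL F n (Equiv.swap ⟨k, Nat.lt_of_succ_lt h⟩ ⟨k + 1, h⟩)))
      = φ (if u = 0 ∨ π ⟨k + 1, h⟩ < π ⟨k, Nat.lt_of_succ_lt h⟩ then
        π * Equiv.swap ⟨k, Nat.lt_of_succ_lt h⟩ ⟨k + 1, h⟩ else π) := by
    intro u
    rw [Function.comp, bru_eq (dc_step rfl hne π hl u)]
  rw [Finset.sum_congr rfl fun u _ => e u]
  by_cases hd : π ⟨k + 1, h⟩ < π ⟨k, Nat.lt_of_succ_lt h⟩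
  · rw [if_pos hd]
    simp [hd]
  · rw [if_neg hd]
    simp only [hd, or_false]
    rw [← Finset.add_sum_erase Finset.univ _ (Finset.mem_univ (0 : F)), if_pos rfl,
      Finset.sum_congr rfl (g := fun _ => φ π) fun u hu => by
        rw [if_neg (Finset.ne_of_mem_erase hu)],
      Finset.sum_const, Finset.card_erase_of_mem (Finset.mem_univ _), Finset.card_univ,
      nsmul_eq_mul, Nat.cast_sub Fintype.card_pos]
    simp

lemma pivot_eq (hn : 0 < n) (C : Cosets F n) : pivotRow F n C = (bru C ⟨0, hn⟩ : ℕ) := by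
  obtain ⟨l, hl, hC⟩ := bru_rep C
  set π := bru C with hπ
  obtain ⟨b, hb⟩ := QuotientGroup.mk_out_eq_mul (Bsub F n) (l * permGL F n π)
  rw [← hC] at hb
  have hent : ∀ i : Fin n, (C.out : Matrix (Fin n) (Fin n) F) i ⟨0, hn⟩
      = l i (π ⟨0, hn⟩) * b.1 ⟨0, hn⟩ ⟨0, hn⟩ := by
    intro i
    rw [hb]
    show ((l : Matrix (Fin n) (Fin n) F) * permMat F n π * (b.1 : Matrix (Fin n) (Fin n) F)) i _ = _
    rw [Matrix.mul_apply, Finset.sum_eq_single ⟨0, hn⟩, mul_permMat_apply]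
    · intro j _ hj
      rw [b.2 j ⟨0, hn⟩ (by
        rw [Fin.lt_def]
        exact Nat.pos_of_ne_zero fun e => hj (Fin.ext e)), mul_zero]
    · simp
  unfold pivotRow
  apply le_antisymm
  · apply Nat.sInf_le
    refine ⟨(π ⟨0, hn⟩).2, ?_⟩
    rw [hent]
    exact mul_ne_zero (lower_diag_ne hl _) (upper_diag_ne b.2 _)
  · apply le_csInf
    · refine ⟨_, (π ⟨0, hn⟩).2, ?_⟩
      rw [hent]
      exact mul_ne_zero (lower_diag_ne hl _) (upper_diag_ne b.2 _)
    · rintro i ⟨hi, h0⟩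
      by_contra hcon
      push Not at hcon
      apply h0
      rw [hent, hl _ _ (Fin.lt_def.mpr hcon), zero_mul]

lemma XGB_mulVec (hn : 0 < n) (x : Fin n → ℝ) (φ : Cosets F n → ℝ) (C : Cosets F n) :
    (XGB F n ℝ x).mulVec φ C = x (bru C ⟨0, hn⟩) /
      (Fintype.card F : ℝ) ^ (n - 1 - (bru C ⟨0, hn⟩ : ℕ)) * φ C := by
  simp only [Matrix.mulVec, dotProduct, XGB, ite_mul, zero_mul, Finset.sum_ite_eq',
    Finset.mem_univ, if_true, pivot_eq hn C, Fin.is_lt, dif_pos, Fin.eta]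

lemma XSnP_mulVec (hn : 0 < n) (q : ℝ) (x : Fin n → ℝ) (φ : Equiv.Perm (Fin n) → ℝ)
    (π : Equiv.Perm (Fin n)) :
    (XSnP n q x).mulVec φ π = x (π ⟨0, hn⟩) / q ^ (n - 1 - (π ⟨0, hn⟩ : ℕ)) * φ π := by
  simp only [Matrix.mulVec, dotProduct, XSnP, ite_mul, zero_mul, Finset.sum_ite_eq',
    Finset.mem_univ, if_true, dif_pos hn]

lemma lump_X (hn : 0 < n) (x : Fin n → ℝ) :
    Lump (bru : Cosets F n → Equiv.Perm (Fin n)) (XGB F n ℝ x) (XSnP n (Fintype.card F : ℝ) x) := by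
  intro φ
  ext C
  rw [XGB_mulVec hn, Function.comp, Function.comp, XSnP_mulVec hn]

lemma lump_prod (k : ℕ) :
    Lump (bru : Cosets F n → Equiv.Perm (Fin n)) (prodGenGB F n ℝ k) (prodGenP n (Fintype.card F : ℝ) k) := by
  induction k with
  | zero => exact Lump.one (bru : Cosets F n → Equiv.Perm (Fin n))
  | succ k ih => exact (lump_gen k).mul ih

lemma lump_T (hn : 0 < n) (x : Fin n → ℝ) :
    Lump (bru : Cosets F n → Equiv.Perm (Fin n)) (TGB F n ℝ x) (TSnP n (Fintype.card F : ℝ) x) :=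
  (Lump.sum (fun k => lump_prod k) _).mul (lump_X hn x)

end bruhat

/-! ### Irreducibility on `G/B` -/

section irreducible
variable {F n}

lemma genGB_nonneg (k : ℕ) (C D : Cosets F n) : 0 ≤ genGB F n ℝ k C D := by
  unfold genGB
  split_ifs <;> positivity

lemma prodGB_nonneg (k : ℕ) : ∀ C D : Cosets F n, 0 ≤ prodGenGB F n ℝ k C D := by
  induction k with
  | zero =>
    intro C D
    simp only [prodGenGB, Matrix.one_apply]
    split_ifs <;> simp
  | succ k ih =>
    intro C D
    simp only [prodGenGB, Matrix.mul_apply]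
    exact Finset.sum_nonneg fun E _ => mul_nonneg (genGB_nonneg k C E) (ih E D)

lemma TGB_apply (hn : 0 < n) (x : Fin n → ℝ) (C D : Cosets F n) :
    TGB F n ℝ x C D = (∑ k ∈ Finset.range n, prodGenGB F n ℝ k C D) *
      (x (bru D ⟨0, hn⟩) / (Fintype.card F : ℝ) ^ (n - 1 - (bru D ⟨0, hn⟩ : ℕ))) := by
  have h1 : ∀ E : Cosets F n, XGB F n ℝ x E D = if E = D then
      (x (bru D ⟨0, hn⟩) / (Fintype.card F : ℝ) ^ (n - 1 - (bru D ⟨0, hn⟩ : ℕ))) else 0 := by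
    intro E
    by_cases hE : E = D
    · subst hE
      simp [XGB, pivot_eq hn]
    · simp [XGB, hE, Ne.symm hE]
  rw [TGB, Matrix.mul_apply]
  simp only [h1, mul_ite, mul_zero, Finset.sum_ite_eq', Finset.mem_univ, if_true,
    Matrix.sum_apply]

lemma card_pos_real : (0 : ℝ) < (Fintype.card F : ℝ) := by
  exact_mod_cast Fintype.card_pos

lemma TGB_nonneg (hn : 0 < n) {x : Fin n → ℝ} (hx : ∀ i, 0 < x i) (C D : Cosets F n) :
    0 ≤ TGB F n ℝ x C D := by
  rw [TGB_apply hn]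
  have := card_pos_real (F := F)
  exact mul_nonneg (Finset.sum_nonneg fun k _ => prodGB_nonneg k C D)
    (div_nonneg (hx _).le (by positivity))

lemma TGB_pos (hn : 0 < n) {x : Fin n → ℝ} (hx : ∀ i, 0 < x i) {C D : Cosets F n}
    {k : ℕ} (hk : k < n) (h : 0 < prodGenGB F n ℝ k C D) : 0 < TGB F n ℝ x C D := by
  rw [TGB_apply hn]
  have := card_pos_real (F := F)
  exact mul_pos (Finset.sum_pos' (fun k _ => prodGB_nonneg k C D)
    ⟨k, Finset.mem_range.mpr hk, h⟩) (div_pos (hx _) (by positivity))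

/-- The adjacent transposition as a group element (identity if out of range). -/
def adj (F : Type) [Field F] [Fintype F] [DecidableEq F] (n k : ℕ) : GLn F n :=
  if h : k + 1 < n then permGL F n (Equiv.swap ⟨k, Nat.lt_of_succ_lt h⟩ ⟨k + 1, h⟩) else 1

/-- the cycles `s_k ⋯ s_1`. -/
def cyc (F : Type) [Field F] [Fintype F] [DecidableEq F] (n : ℕ) : ℕ → GLn F n
  | 0 => 1
  | k + 1 => adj F n k * cyc F n k

lemma genGB_pos {k : ℕ} (h : k + 1 < n) (g : GLn F n) :
    0 < genGB F n ℝ k (QuotientGroup.mk g) (QuotientGroup.mk (g * adj F n k)) := by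
  have hne : (⟨k, Nat.lt_of_succ_lt h⟩ : Fin n) ≠ ⟨k + 1, h⟩ := by simp [Fin.ext_iff]
  have e := genGB_mulVec h hne g (Pi.single (QuotientGroup.mk (g * adj F n k)) 1)
  rw [Matrix.mulVec_single_one] at e
  show 0 < (genGB F n ℝ k).col _ _
  rw [e]
  refine Finset.sum_pos' (fun u _ => ?_) ⟨0, Finset.mem_univ _, ?_⟩
  · rw [Pi.single_apply]; split_ifs <;> simp
  · rw [transv_zero, mul_one, adj, dif_pos h, Pi.single_eq_same]
    exact one_pos

lemma prodGB_pos (k : ℕ) (hk : k < n) : ∀ g : GLn F n,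
    0 < prodGenGB F n ℝ k (QuotientGroup.mk g) (QuotientGroup.mk (g * cyc F n k)) := by
  induction k with
  | zero => intro g; rw [cyc, mul_one, prodGenGB, Matrix.one_apply_eq]; exact one_pos
  | succ k ih =>
    intro g
    simp only [prodGenGB, cyc, Matrix.mul_apply]
    refine Finset.sum_pos' (fun E _ => mul_nonneg (genGB_nonneg _ _ _) (prodGB_nonneg _ _ _))
      ⟨QuotientGroup.mk (g * adj F n k), Finset.mem_univ _, mul_pos (genGB_pos hk g) ?_⟩
    have := ih (Nat.lt_of_succ_lt hk) (g * adj F n k)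
    rwa [mul_assoc] at this

lemma TGB_irr (hn : 0 < n) {x : Fin n → ℝ} (hx : ∀ i, 0 < x i) : Irr (TGB F n ℝ x) := by
  intro S hS hcl C
  obtain ⟨C₀, hC₀⟩ := hS
  obtain ⟨g₀, rfl⟩ := QuotientGroup.mk_surjective C₀
  obtain ⟨g, rfl⟩ := QuotientGroup.mk_surjective C
  have hcyc : ∀ k, k < n → ∀ g : GLn F n, (QuotientGroup.mk g : Cosets F n) ∈ S →
      (QuotientGroup.mk (g * cyc F n k) : Cosets F n) ∈ S := fun k hk g hg =>
    hcl _ hg _ (TGB_pos hn hx hk (prodGB_pos k hk g))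
  have hpow : ∀ k, k < n → ∀ (j : ℕ) (g : GLn F n), (QuotientGroup.mk g : Cosets F n) ∈ S →
      (QuotientGroup.mk (g * cyc F n k ^ j) : Cosets F n) ∈ S := by
    intro k hk j
    induction j with
    | zero => intro g hg; simpa using hg
    | succ j ih =>
      intro g hg
      rw [pow_succ, ← mul_assoc]
      exact hcyc k hk _ (ih g hg)
  have hinv : ∀ k, k < n → ∀ g : GLn F n, (QuotientGroup.mk g : Cosets F n) ∈ S →
      (QuotientGroup.mk (g * (cyc F n k)⁻¹) : Cosets F n) ∈ S := by
    intro k hk g hg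
    have : (cyc F n k)⁻¹ = cyc F n k ^ (orderOf (cyc F n k) - 1) := by
      apply inv_eq_of_mul_eq_one_right
      rw [← pow_succ', Nat.sub_add_cancel (orderOf_pos _), pow_orderOf_eq_one]
    rw [this]
    exact hpow k hk _ g hg
  refine gen_closed {g | (QuotientGroup.mk g : Cosets F n) ∈ S} ?_ ?_ (g := g₀) hC₀ g
  · intro g hg b hb
    show (QuotientGroup.mk (g * b) : Cosets F n) ∈ S
    rwa [mk_mul_upper g hb]
  · intro g hg k h
    have h1 := hinv k (Nat.lt_of_succ_lt h) _ (hcyc (k + 1) h g hg)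
    rw [cyc, mul_assoc, mul_inv_cancel_right, adj, dif_pos h] at h1
    exact h1

/-! ### Equivariance under lower triangular matrices -/

/-- left translation -/
def ltr (h : GLn F n) (C : Cosets F n) : Cosets F n := h • C

lemma ltr_mk (h g : GLn F n) : ltr h (QuotientGroup.mk g : Cosets F n) = QuotientGroup.mk (h * g) :=
  rfl

lemma lump_ltr_gen (h : GLn F n) (k : ℕ) : Lump (ltr h) (genGB F n ℝ k) (genGB F n ℝ k) := by
  by_cases hk : k + 1 < n
  swap
  · have e1 : genGB F n ℝ k = 0 := by ext C D; simp [genGB, hk]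
    rw [e1]
    exact Lump.zero _
  intro φ
  ext C
  obtain ⟨g, rfl⟩ := QuotientGroup.mk_surjective C
  have hne : (⟨k, Nat.lt_of_succ_lt hk⟩ : Fin n) ≠ ⟨k + 1, hk⟩ := by simp [Fin.ext_iff]
  rw [Function.comp_apply, ltr_mk, genGB_mulVec hk hne, genGB_mulVec hk hne]
  refine Finset.sum_congr rfl fun u _ => ?_
  rw [Function.comp_apply, ltr_mk]
  simp only [mul_assoc]

lemma bru_ltr {h : GLn F n} (hh : lowerTri (h : Matrix (Fin n) (Fin n) F)) (C : Cosets F n) :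
    bru (ltr h C) = bru C := by
  obtain ⟨l, b, hl, hb, he⟩ := bru_spec C
  refine bru_eq ⟨h * l, b, lower_mul hh hl, hb, ?_⟩
  conv_lhs => rw [he]
  rw [ltr_mk]
  simp only [mul_assoc]

lemma lump_ltr_T (hn : 0 < n) (x : Fin n → ℝ) {h : GLn F n}
    (hh : lowerTri (h : Matrix (Fin n) (Fin n) F)) :
    Lump (ltr h) (TGB F n ℝ x) (TGB F n ℝ x) := by
  refine Lump.mul (Lump.sum (fun k => ?_) _) ?_
  · induction k with
    | zero => exact Lump.one (ltr h)
    | succ k ih => exact (lump_ltr_gen h k).mul ih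
  · intro φ
    ext C
    rw [XGB_mulVec hn, Function.comp_apply, Function.comp_apply, XGB_mulVec hn, bru_ltr hh]

lemma psi_ltr (hn : 0 < n) {x : Fin n → ℝ} (hx : ∀ i, 0 < x i) {c : ℝ} (hc : 0 < c)
    {Ψ : Cosets F n → ℝ} (hΨ : IsStationary (TGB F n ℝ x) c Ψ) {h : GLn F n}
    (hh : lowerTri (h : Matrix (Fin n) (Fin n) F)) (C : Cosets F n) : Ψ (ltr h C) = Ψ C := by
  have e := stationary_unique (TGB_nonneg hn hx) (TGB_irr hn hx) hc hΨ
    ((lump_ltr_T hn x hh).stationary hΨ)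
  conv_lhs => rw [e]
  rw [push_apply]
  have : (Finset.univ.filter fun a => ltr h a = ltr h C) = {C} := by
    ext D
    simp [ltr]
  rw [this, Finset.sum_singleton]

lemma psi_const (hn : 0 < n) {x : Fin n → ℝ} (hx : ∀ i, 0 < x i) {c : ℝ} (hc : 0 < c)
    {Ψ : Cosets F n → ℝ} (hΨ : IsStationary (TGB F n ℝ x) c Ψ) {C C' : Cosets F n}
    (h : bru C = bru C') : Ψ C = Ψ C' := by
  have key : ∀ C : Cosets F n, Ψ C = Ψ (QuotientGroup.mk (permGL F n (bru C))) := by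
    intro C
    obtain ⟨l, hl, he⟩ := bru_rep C
    conv_lhs => rw [he, ← ltr_mk, psi_ltr hn hx hc hΨ hl]
  rw [key C, key C', h]


lemma sum_mk (φ : Cosets F n → ℝ) :
    ∑ g : GLn F n, φ (QuotientGroup.mk g) = (Fintype.card (Bsub F n) : ℝ) * ∑ C, φ C := by
  rw [← Finset.sum_fiberwise Finset.univ (fun g : GLn F n => (QuotientGroup.mk g : Cosets F n)),
    Finset.mul_sum]
  refine Finset.sum_congr rfl fun C _ => ?_
  rw [Finset.sum_congr rfl (g := fun _ => φ C) fun g hg => by rw [(Finset.mem_filter.mp hg).2],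
    Finset.sum_const, nsmul_eq_mul]
  congr 2
  obtain ⟨g, rfl⟩ := QuotientGroup.mk_surjective C
  rw [← Finset.card_univ]
  symm
  refine Finset.card_bij (fun b _ => g * b.1) ?_ ?_ ?_
  · intro b _
    simp only [Finset.mem_filter, Finset.mem_univ, true_and]
    exact mk_mul_upper g b.2
  · intro b _ b' _ e
    exact Subtype.ext (mul_left_cancel e)
  · intro h hh
    simp only [Finset.mem_filter, Finset.mem_univ, true_and] at hh
    exact ⟨⟨g⁻¹ * h, QuotientGroup.eq.mp hh.symm⟩, Finset.mem_univ _, by simp⟩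

lemma sum_genGB {k : ℕ} (h : k + 1 < n) (φ : Cosets F n → ℝ) :
    ∑ C, (genGB F n ℝ k).mulVec φ C = (Fintype.card F : ℝ) * ∑ C, φ C := by
  have hne : (⟨k, Nat.lt_of_succ_lt h⟩ : Fin n) ≠ ⟨k + 1, h⟩ := by simp [Fin.ext_iff]
  have hB : (Fintype.card (Bsub F n) : ℝ) ≠ 0 := by
    exact_mod_cast Fintype.card_ne_zero
  apply mul_left_cancel₀ hB
  rw [← sum_mk, mul_left_comm, ← sum_mk]
  simp only [genGB_mulVec h hne]
  rw [Finset.sum_comm]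
  have e : ∀ u : F, ∑ g : GLn F n, φ (QuotientGroup.mk (g *
      transvGL F n ⟨k, Nat.lt_of_succ_lt h⟩ ⟨k + 1, h⟩ hne u *
          permGL F n (Equiv.swap ⟨k, Nat.lt_of_succ_lt h⟩ ⟨k + 1, h⟩)))
      = ∑ g : GLn F n, φ (QuotientGroup.mk g) := by
    intro u
    simp only [mul_assoc]
    exact Equiv.sum_comp (Equiv.mulRight (transvGL F n ⟨k, Nat.lt_of_succ_lt h⟩ ⟨k + 1, h⟩ hne u *
          permGL F n (Equiv.swap ⟨k, Nat.lt_of_succ_lt h⟩ ⟨k + 1, h⟩)))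
          (fun g => φ (QuotientGroup.mk g))
  rw [Finset.sum_congr rfl fun u _ => e u]
  simp

/-- the number of cosets in the double coset of `π`, as a real number. -/
def dcSize (F : Type) [Field F] [Fintype F] [DecidableEq F] (n : ℕ)
    (π : Equiv.Perm (Fin n)) : ℝ := push (bru : Cosets F n → Equiv.Perm (Fin n)) (fun _ => 1) π

lemma dcSize_vecMul {k : ℕ} (h : k + 1 < n) :
    Matrix.vecMul (dcSize F n) (genMatP n (Fintype.card F : ℝ) k)
      = (Fintype.card F : ℝ) • dcSize F n := by
  have e1 := (lump_gen (F := F) (n := n) k).vecMul_push (fun _ => 1)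
  have e2 : Matrix.vecMul (fun _ => 1) (genGB F n ℝ k) = fun _ => (Fintype.card F : ℝ) := by
    ext D
    have := sum_genGB h (Pi.single D (1 : ℝ))
    rw [Matrix.mulVec_single_one] at this
    simpa [Matrix.vecMul, dotProduct] using this
  rw [e2] at e1
  unfold dcSize
  show Matrix.vecMul (push bru fun _ => 1) _ = _
  rw [e1]
  ext π
  simp [push]
  ring

lemma dcSize_step {k : ℕ} (h : k + 1 < n) (π : Equiv.Perm (Fin n))
    (ha : π ⟨k, Nat.lt_of_succ_lt h⟩ < π ⟨k + 1, h⟩) :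
    dcSize F n π = (Fintype.card F : ℝ) *
      dcSize F n (π * Equiv.swap ⟨k, Nat.lt_of_succ_lt h⟩ ⟨k + 1, h⟩) := by
  have hne : (⟨k, Nat.lt_of_succ_lt h⟩ : Fin n) ≠ ⟨k + 1, h⟩ := by simp [Fin.ext_iff]
  set s := Equiv.swap (⟨k, Nat.lt_of_succ_lt h⟩ : Fin n) ⟨k + 1, h⟩ with hs
  have hs1 : s ≠ 1 := by
    intro e
    exact hne (Equiv.swap_eq_one_iff.mp e)
  have hss : s * s = 1 := Equiv.swap_mul_self _ _
  have e := congrFun (dcSize_vecMul (F := F) h) (π * s)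
  rw [Pi.smul_apply, smul_eq_mul] at e
  rw [← e]
  show _ = ∑ ρ, dcSize F n ρ * genMatP n (Fintype.card F : ℝ) k ρ (π * s)
  rw [Finset.sum_eq_single π]
  · simp only [genMatP, dif_pos h, if_neg ha.asymm]
    rw [if_pos rfl, if_neg (by simpa using hs1)]
    simp
  · intro ρ _ hρ
    simp only [genMatP, dif_pos h]
    have h1 : ¬ (π * s = ρ * s) := fun e => hρ (mul_right_cancel e).symm
    rw [← hs, if_neg h1, if_neg h1]
    by_cases h2 : π * s = ρ
    · have : ρ ⟨k + 1, h⟩ < ρ ⟨k, Nat.lt_of_succ_lt h⟩ := by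
        rw [← h2, hs]
        simpa using ha
      simp [this]
    · simp [h2]
  · simp

lemma coinv_step {m k : ℕ} (h : k + 1 < m) (π : Equiv.Perm (Fin m))
    (ha : π ⟨k, Nat.lt_of_succ_lt h⟩ < π ⟨k + 1, h⟩) :
    coinvCount π = coinvCount (π * Equiv.swap ⟨k, Nat.lt_of_succ_lt h⟩ ⟨k + 1, h⟩) + 1 := by
  set a : Fin m := ⟨k, Nat.lt_of_succ_lt h⟩ with hadef
  set b : Fin m := ⟨k + 1, h⟩ with hbdef
  have hab : (a : ℕ) + 1 = b := rfl
  have hlt : a < b := by rw [Fin.lt_def]; omega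
  unfold coinvCount
  have e : (Finset.univ.filter fun p : Fin m × Fin m => p.1 < p.2 ∧ π p.1 < π p.2)
      = insert (a, b) ((Finset.univ.filter fun p : Fin m × Fin m => p.1 < p.2 ∧
          (π * Equiv.swap a b) p.1 < (π * Equiv.swap a b) p.2).map
          ((Equiv.swap a b).prodCongr (Equiv.swap a b)).toEmbedding) := by
    ext ⟨i, j⟩
    simp only [Finset.mem_filter, Finset.mem_univ, true_and, Finset.mem_insert, Finset.mem_map_equiv,
      Equiv.prodCongr_symm, Equiv.symm_swap, Equiv.prodCongr_apply, Prod.map, Prod.mk.injEq]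
    simp only [Equiv.Perm.mul_apply, Equiv.swap_apply_self]
    constructor
    · rintro ⟨h1, h2⟩
      by_cases h3 : Equiv.swap a b i < Equiv.swap a b j
      · exact Or.inr ⟨h3, h2⟩
      · exact Or.inl (swap_adj hab h1 h3)
    · rintro (⟨rfl, rfl⟩ | ⟨h1, h2⟩)
      · exact ⟨hlt, ha⟩
      · refine ⟨?_, h2⟩
        by_contra h3
        have h4 := swap_adj hab h1 (by simpa using h3)
        have hi : i = b := by
          rw [← Equiv.swap_apply_self a b i, h4.1, Equiv.swap_apply_left]
        have hj : j = a := by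
          rw [← Equiv.swap_apply_self a b j, h4.2, Equiv.swap_apply_right]
        subst hi hj
        exact absurd h2 ha.asymm
  rw [e, Finset.card_insert_of_notMem, Finset.card_map]
  simp only [Finset.mem_filter, Finset.mem_univ, true_and, Finset.mem_map_equiv,
      Equiv.prodCongr_symm, Equiv.symm_swap, Equiv.prodCongr_apply, Prod.map,
      Equiv.swap_apply_left, Equiv.swap_apply_right]
  exact fun hc => absurd hc.1 hlt.asymm

lemma dcSize_eq (π : Equiv.Perm (Fin n)) :
    dcSize F n π = (Fintype.card F : ℝ) ^ coinvCount π := by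
  induction hc : coinvCount π using Nat.strong_induction_on generalizing π with
  | _ c ih =>
    by_cases hasc : ∃ k, ∃ h : k + 1 < n, π ⟨k, Nat.lt_of_succ_lt h⟩ < π ⟨k + 1, h⟩
    · obtain ⟨k, h, ha⟩ := hasc
      have h1 := coinv_step h π ha
      rw [dcSize_step h π ha, ih _ (by omega) _ rfl, ← hc, h1, pow_succ, mul_comm]
    · push Not at hasc
      have hanti : StrictAnti π := by
        cases n with
        | zero => intro i; exact i.elim0
        | succ n =>
          rw [Fin.strictAnti_iff_succ_lt]
          intro i
          refine lt_of_le_of_ne (hasc i.1 (Nat.succ_lt_succ i.2)) fun e => ?_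
          have := π.injective e
          simp [Fin.ext_iff] at this
      have hc0 : coinvCount π = 0 := by
        unfold coinvCount
        rw [Finset.card_eq_zero, Finset.filter_eq_empty_iff]
        rintro ⟨i, j⟩ _ ⟨h1, h2⟩
        exact absurd h2 (hanti h1).asymm
      rw [← hc, hc0, pow_zero]
      have : (Finset.univ.filter fun C : Cosets F n => bru C = π)
          = {QuotientGroup.mk (permGL F n π)} := by
        ext C
        simp only [Finset.mem_filter, Finset.mem_univ, true_and, Finset.mem_singleton]
        constructor
        · intro hC
          obtain ⟨l, hl, he⟩ := bru_rep C
          rw [hC] at he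
          rw [he]
          symm
          apply mk_eq
          rw [← mul_assoc]
          intro i j hij
          rw [conj_apply]
          exact hl _ _ (hanti hij)
        · rintro rfl
          obtain ⟨C, hC⟩ := bru_surj (F := F) π
          obtain ⟨l, hl, he⟩ := bru_rep C
          rw [hC] at he
          have : (QuotientGroup.mk (permGL F n π) : Cosets F n) = C := by
            rw [he]
            apply mk_eq
            rw [← mul_assoc]
            intro i j hij
            rw [conj_apply]
            exact hl _ _ (hanti hij)
          rw [this, hC]
      unfold dcSize
      rw [push_apply, this, Finset.sum_singleton]

end irreducible

/-! ### Words -/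

section words
variable {l : ℕ} {m : Fin l → ℕ} {N : ℕ}

lemma nsum_succ (j : Fin l) : nsum l m ((j : ℕ) + 1) = nsum l m j + m j := by
  unfold nsum
  have : (Finset.univ.filter fun t : Fin l => (t : ℕ) < (j : ℕ) + 1)
      = insert j (Finset.univ.filter fun t : Fin l => (t : ℕ) < (j : ℕ)) := by
    ext t
    simp only [Finset.mem_filter, Finset.mem_univ, true_and, Finset.mem_insert, Fin.ext_iff]
    omega
  rw [this, Finset.sum_insert (by simp), add_comm]

lemma nsum_mono {a b : ℕ} (h : a ≤ b) : nsum l m a ≤ nsum l m b := by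
  unfold nsum
  apply Finset.sum_le_sum_of_subset
  intro t
  simp only [Finset.mem_filter, Finset.mem_univ, true_and]
  omega

lemma nsum_zero : nsum l m 0 = 0 := by simp [nsum]

lemma nsum_top {j : ℕ} (h : l ≤ j) : nsum l m j = ∑ t, m t := by
  unfold nsum
  congr 1
  ext t
  simp only [Finset.mem_filter, Finset.mem_univ, true_and, iff_true]
  omega

lemma nsum_le (j : ℕ) : nsum l m j ≤ ∑ t, m t := by
  rw [← nsum_top (le_max_left l j)]
  exact nsum_mono (le_max_right _ _)

lemma block_mem {v : ℕ} (hv : v < ∑ t, m t) : v < nsum l m (blockOf l m v + 1) := by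
  have hne : {j : ℕ | v < nsum l m (j + 1)}.Nonempty :=
    ⟨l, by rw [Set.mem_ofPred_eq, nsum_top (Nat.le_succ l)]; exact hv⟩
  exact Nat.sInf_mem hne

lemma block_lt {v : ℕ} (hv : v < ∑ t, m t) : blockOf l m v < l := by
  have hl : 0 < l := by
    rcases Nat.eq_zero_or_pos l with rfl | h
    · simp at hv
    · exact h
  have : blockOf l m v ≤ l - 1 := by
    apply Nat.sInf_le
    rw [Set.mem_ofPred_eq, nsum_top (by omega)]
    exact hv
  omega

lemma block_iff {v : ℕ} (hv : v < ∑ t, m t) (j : ℕ) :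
    blockOf l m v = j ↔ nsum l m j ≤ v ∧ v < nsum l m (j + 1) := by
  constructor
  · rintro rfl
    refine ⟨?_, block_mem hv⟩
    by_contra hcon
    push Not at hcon
    rcases Nat.eq_zero_or_pos (blockOf l m v) with h0 | h0
    · rw [h0, nsum_zero] at hcon
      omega
    · have h1 : blockOf l m v ≤ blockOf l m v - 1 := by
        apply Nat.sInf_le
        rw [Set.mem_ofPred_eq, Nat.sub_add_cancel h0]
        exact hcon
      omega
  · rintro ⟨h1, h2⟩
    apply le_antisymm
    · exact Nat.sInf_le h2
    · by_contra hcon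
      push Not at hcon
      have := block_mem hv
      have h3 : nsum l m (blockOf l m v + 1) ≤ nsum l m j := nsum_mono hcon
      omega

lemma block_mono {v w : ℕ} (hv : w < ∑ t, m t) (h : v ≤ w) : blockOf l m v ≤ blockOf l m w :=
  Nat.sInf_le (lt_of_le_of_lt h (block_mem hv))

lemma block_sum {M : Type} [AddCommMonoid M] (hm : ∑ t, m t = N) (g : ℕ → M) (j : Fin l) :
    ∑ v ∈ Finset.univ.filter (fun v : Fin N => blockOf l m v = (j : ℕ)), g v
      = ∑ r ∈ Finset.range (m j), g (nsum l m j + r) := by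
  rw [Finset.sum_filter,
    Fin.sum_univ_eq_sum_range (fun v => if blockOf l m v = (j : ℕ) then g v else 0) N,
    ← Finset.sum_filter]
  have : (Finset.range N).filter (fun v => blockOf l m v = (j : ℕ))
      = Finset.Ico (nsum l m j) (nsum l m ((j : ℕ) + 1)) := by
    ext v
    simp only [Finset.mem_filter, Finset.mem_range, Finset.mem_Ico]
    constructor
    · rintro ⟨h1, h2⟩
      exact (block_iff (by omega) _).mp h2
    · intro h
      have h1 : nsum l m ((j : ℕ) + 1) ≤ ∑ t, m t := nsum_le _
      exact ⟨by omega, (block_iff (by omega) _).mpr h⟩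
  rw [this, Finset.sum_Ico_eq_sum_range, nsum_succ, Nat.add_sub_cancel_left]

lemma block_card (hm : ∑ t, m t = N) (j : Fin l) :
    (Finset.univ.filter (fun v : Fin N => blockOf l m v = (j : ℕ))).card = m j := by
  have := block_sum hm (fun _ => 1) j
  simpa using this

/-- The block map as a map `Fin N → Fin l`. -/
def blk (hm : ∑ t, m t = N) (v : Fin N) : Fin l := ⟨blockOf l m v, block_lt (hm ▸ v.2)⟩

/-- destandardization -/
def destd (hm : ∑ t, m t = N) (π : Equiv.Perm (Fin N)) : Words N l m :=
  ⟨fun p => blk hm (π p), by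
    intro j
    rw [← block_card hm j]
    refine Finset.card_bij (fun p _ => π p) ?_ ?_ ?_
    · intro p hp
      simpa [blk, Fin.ext_iff] using hp
    · intro p _ p' _ h
      exact π.injective h
    · intro v hv
      exact ⟨π⁻¹ v, by simpa [blk, Fin.ext_iff] using hv, by simp⟩⟩

lemma destd_surj (hm : ∑ t, m t = N) : Function.Surjective (destd hm) := by
  intro w
  have hcard : ∀ j, Fintype.card {p // w.1 p = j} = Fintype.card {v // blk hm v = j} := by
    intro j
    rw [Fintype.card_subtype, Fintype.card_subtype, w.2 j, ← block_card hm j]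
    congr 1
    ext v
    simp [blk, Fin.ext_iff]
  let π : Equiv.Perm (Fin N) := (Equiv.sigmaFiberEquiv w.1).symm.trans
    ((Equiv.sigmaCongrRight fun j => Fintype.equivOfCardEq (hcard j)).trans
      (Equiv.sigmaFiberEquiv (blk hm)))
  refine ⟨π, Subtype.ext (funext fun p => ?_)⟩
  exact (Fintype.equivOfCardEq (hcard (w.1 p)) ⟨p, rfl⟩).2

lemma destd_iff (hm : ∑ t, m t = N) (π : Equiv.Perm (Fin N)) (w : Words N l m) :
    destd hm π = w ↔ ∀ p : Fin N, (w.1 p : ℕ) = blockOf l m (π p : ℕ) := by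
  constructor
  · rintro rfl p
    rfl
  · intro h
    exact Subtype.ext (funext fun p => Fin.ext (h p).symm)

lemma genMatW_mulVec (hm : ∑ t, m t = N) {k : ℕ} (h : k + 1 < N) (q : ℝ) (φ : Words N l m → ℝ)
    (π : Equiv.Perm (Fin N)) :
    (genMatW N l m q k).mulVec φ (destd hm π) =
      if blk hm (π ⟨k + 1, h⟩) ≤ blk hm (π ⟨k, Nat.lt_of_succ_lt h⟩) then
        q * φ (destd hm (π * Equiv.swap ⟨k, Nat.lt_of_succ_lt h⟩ ⟨k + 1, h⟩))
      else φ (destd hm (π * Equiv.swap ⟨k, Nat.lt_of_succ_lt h⟩ ⟨k + 1, h⟩))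
        + (q - 1) * φ (destd hm π) := by
  have e : ∀ u : Words N l m, (u.1 = (destd hm π).1 ∘
      Equiv.swap ⟨k, Nat.lt_of_succ_lt h⟩ ⟨k + 1, h⟩) ↔
      u = destd hm (π * Equiv.swap ⟨k, Nat.lt_of_succ_lt h⟩ ⟨k + 1, h⟩) := by
    intro u
    rw [Subtype.ext_iff]
    rfl
  simp only [Matrix.mulVec, dotProduct, genMatW, dif_pos h, e]
  change ∑ x, (if blk hm (π ⟨k + 1, h⟩) ≤ blk hm (π ⟨k, Nat.lt_of_succ_lt h⟩) then _ else _) * φ x = _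
  split_ifs
  · simp
  · simp [add_mul, Finset.sum_add_distrib]

lemma lumpW_gen (hm : ∑ t, m t = N) (q : ℝ) (k : ℕ) :
    Lump (destd hm) (genMatP N q k) (genMatW N l m q k) := by
  by_cases h : k + 1 < N
  swap
  · have e1 : genMatW N l m q k = 0 := by ext C D; simp [genMatW, h]
    have e2 : genMatP N q k = 0 := by ext C D; simp [genMatP, h]
    rw [e1, e2]
    exact Lump.zero _
  intro φ
  ext π
  rw [Function.comp_apply, genMatP_mulVec h, genMatW_mulVec hm h]
  simp only [Function.comp_apply]
  set a : Fin N := ⟨k, Nat.lt_of_succ_lt h⟩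
  set b : Fin N := ⟨k + 1, h⟩
  by_cases h1 : π b < π a
  · rw [if_pos h1, if_pos]
    exact Fin.le_def.mpr (block_mono (hm ▸ (π a).2) (Fin.le_def.mp h1.le))
  · rw [if_neg h1]
    by_cases h2 : blk hm (π b) ≤ blk hm (π a)
    · rw [if_pos h2]
      have h3 : blk hm (π a) ≤ blk hm (π b) :=
        Fin.le_def.mpr (block_mono (hm ▸ (π b).2) (Fin.le_def.mp (not_lt.mp h1)))
      have h4 := le_antisymm h2 h3
      have h5 : destd hm (π * Equiv.swap a b) = destd hm π := by
        apply Subtype.ext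
        funext p
        show blk hm (π (Equiv.swap a b p)) = blk hm (π p)
        rw [Equiv.swap_apply_def]
        split_ifs with ha hb
        · rw [ha, h4]
        · rw [hb, h4]
        · rfl
      rw [h5]
      ring
    · rw [if_neg h2]

lemma qInt_pos {q : ℝ} (hq : 0 < q) {a : ℕ} (ha : 1 ≤ a) : 0 < qInt q a :=
  Finset.sum_pos (fun r _ => pow_pos hq r) (Finset.nonempty_range_iff.mpr (by omega))

lemma tail_sum (hm : ∑ t, m t = N) (j : Fin l) :
    ∑ t ∈ Finset.univ.filter (fun t : Fin l => j < t), m t = N - nsum l m ((j : ℕ) + 1) := by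
  have := Finset.sum_filter_add_sum_filter_not Finset.univ (fun t : Fin l => (t : ℕ) < (j : ℕ) + 1) m
  have e : (Finset.univ.filter fun t : Fin l => ¬ (t : ℕ) < (j : ℕ) + 1)
      = Finset.univ.filter (fun t : Fin l => j < t) := by
    ext t
    simp only [Finset.mem_filter, Finset.mem_univ, true_and, Fin.lt_def]
    omega
  rw [e, hm] at this
  unfold nsum
  omega

/-- last index of a block -/
lemma last_exists (hm1 : ∀ j, 1 ≤ m j) (hm : ∑ t, m t = N) (j : Fin l) :
    ∃ i : Fin N, (i : ℕ) + 1 = nsum l m ((j : ℕ) + 1) ∧ blockOf l m i = j := by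
  have h1 := nsum_succ (m := m) j
  have h2 := hm1 j
  have h3 : nsum l m ((j : ℕ) + 1) ≤ ∑ t, m t := nsum_le _
  refine ⟨⟨nsum l m ((j : ℕ) + 1) - 1, by omega⟩, by simp; omega, ?_⟩
  rw [block_iff (by simp; omega)]
  simp
  omega

lemma lumpW_X (hN : 0 < N) (hm1 : ∀ j, 1 ≤ m j) (hm : ∑ t, m t = N) {q : ℝ} (hq : 0 < q)
    {x : Fin N → ℝ} (hcomp : mCompatible N l m q x) {xb : Fin l → ℝ}
    (hxb : ∀ (j : Fin l) (iF : Fin N), (iF : ℕ) + 1 = nsum l m ((j : ℕ) + 1) →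
          xb j = qInt q (m j) * x iF) :
    Lump (destd hm) (XSnP N q x) (XW N l m q xb) := by
  intro φ
  ext π
  rw [Function.comp_apply, XSnP_mulVec hN, Function.comp_apply]
  simp only [Matrix.mulVec, dotProduct, XW, ite_mul, zero_mul, Finset.sum_ite_eq',
    Finset.mem_univ, if_true, dif_pos hN]
  congr 1
  set j : Fin l := (destd hm π).1 ⟨0, hN⟩ with hj
  have hjb : (j : ℕ) = blockOf l m (π ⟨0, hN⟩ : ℕ) := rfl
  obtain ⟨i, hi, hib⟩ := last_exists hm1 hm j
  rw [hcomp (π ⟨0, hN⟩) i (by rw [hib, hjb]), hxb j i hi, tail_sum hm, mul_comm,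
    mul_div_mul_right _ _ (qInt_pos hq (hm1 j)).ne', ← hi]
  congr 2
  omega

lemma lumpW_T (hN : 0 < N) (hm1 : ∀ j, 1 ≤ m j) (hm : ∑ t, m t = N) {q : ℝ} (hq : 0 < q)
    {x : Fin N → ℝ} (hcomp : mCompatible N l m q x) {xb : Fin l → ℝ}
    (hxb : ∀ (j : Fin l) (iF : Fin N), (iF : ℕ) + 1 = nsum l m ((j : ℕ) + 1) →
          xb j = qInt q (m j) * x iF) :
    Lump (destd hm) (TSnP N q x) (TWm N l m q xb) := by
  refine Lump.mul (Lump.sum (fun k => ?_) _) (lumpW_X hN hm1 hm hq hcomp hxb)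
  induction k with
  | zero => exact Lump.one (destd hm)
  | succ k ih => exact (lumpW_gen hm q k).mul ih

lemma sum_xb (hm1 : ∀ j, 1 ≤ m j) (hm : ∑ t, m t = N) {q : ℝ} (hq : 0 < q)
    {x : Fin N → ℝ} (hcomp : mCompatible N l m q x) {xb : Fin l → ℝ}
    (hxb : ∀ (j : Fin l) (iF : Fin N), (iF : ℕ) + 1 = nsum l m ((j : ℕ) + 1) →
          xb j = qInt q (m j) * x iF) : ∑ j, xb j = ∑ i, x i := by
  rw [← Finset.sum_fiberwise Finset.univ (blk hm) x]
  refine Finset.sum_congr rfl fun j _ => ?_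
  obtain ⟨i, hi, hib⟩ := last_exists hm1 hm j
  have e1 : (Finset.univ.filter fun v => blk hm v = j)
      = Finset.univ.filter (fun v : Fin N => blockOf l m v = (j : ℕ)) := by
    ext v
    simp [blk, Fin.ext_iff]
  rw [e1, Finset.sum_congr rfl
    (g := fun v : Fin N => x i / q ^ (N - 1 - (i : ℕ)) * q ^ (N - 1 - (v : ℕ)))
    (fun v hv => by
      rw [← hcomp v i (by rw [hib]; exact (Finset.mem_filter.mp hv).2),
        div_mul_cancel₀ _ (pow_pos hq _).ne']),
    block_sum hm (fun v => x i / q ^ (N - 1 - (i : ℕ)) * q ^ (N - 1 - v)) j, hxb j i hi, qInt,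
    ← Finset.sum_range_reflect, Finset.sum_mul]
  refine Finset.sum_congr rfl fun r hr => ?_
  have h1 := nsum_succ (m := m) j
  have hr' := Finset.mem_range.mp hr
  have hi2 := i.2
  have e2 : N - 1 - (nsum l m j + r) = (N - 1 - (i : ℕ)) + (m j - 1 - r) := by omega
  rw [e2, pow_add]
  have := (pow_pos hq (N - 1 - (i : ℕ))).ne'
  field_simp

end words

/-- Lumping of stationary distributions.  Here `q` is a prime power (the
cardinality of the finite field `F`), `Ψg` and `Ψs` are stationary distributions of
`T_{G/B}(q,x)` and `T_{S_n}(q,x)`.  Then: (a) `Ψg` is constant on double cosets; (b) the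
permutation stationary distribution is obtained by summing over the double coset, and
equals `q^{coinv π}` times the common value; (c) for a composition `m` with `x`
`m`-compatible and `x̄_j = [m_j]_q x_{n_j}`, any stationary distribution `Ψw` of
`T_{W_m}(q,x̄)` is obtained from `Ψs` by summing over the fibers of `destd_m`. -/
theorem qTsetlin_lumping (F : Type) [Field F] [Fintype F] [DecidableEq F]
    (n : ℕ) (x : Fin n → ℝ) (hx : ∀ i, 0 < x i) (hx1 : ∑ i, x i = 1)
    (Ψg : Cosets F n → ℝ) (hΨg : IsStationary (TGB F n ℝ x) (∑ i, x i) Ψg)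
    (Ψs : Equiv.Perm (Fin n) → ℝ)
    (hΨs : IsStationary (TSnP n (Fintype.card F : ℝ) x) (∑ i, x i) Ψs) :
    (∀ (π : Equiv.Perm (Fin n)) (C C' : Cosets F n),
      inDC F n π C → inDC F n π C' → Ψg C = Ψg C') ∧
    (∀ π : Equiv.Perm (Fin n),
      Ψs π = ∑ C ∈ Finset.univ.filter fun C : Cosets F n => inDC F n π C, Ψg C) ∧
    (∀ (π : Equiv.Perm (Fin n)) (C : Cosets F n), inDC F n π C →
      Ψs π = (Fintype.card F : ℝ) ^ coinvCount π * Ψg C) ∧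
    (∀ (l : ℕ) (m : Fin l → ℕ), (∀ j, 1 ≤ m j) → (∑ j, m j = n) →
      mCompatible n l m (Fintype.card F : ℝ) x →
      ∀ xb : Fin l → ℝ,
        (∀ (j : Fin l) (iF : Fin n), (iF : ℕ) + 1 = nsum l m ((j : ℕ) + 1) →
          xb j = qInt (Fintype.card F : ℝ) (m j) * x iF) →
        ∀ Ψw : Words n l m → ℝ,
          IsStationary (TWm n l m (Fintype.card F : ℝ) xb) (∑ j, xb j) Ψw →
          ∀ w : Words n l m,
            Ψw w = ∑ π ∈ Finset.univ.filter fun π : Equiv.Perm (Fin n) =>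
                ∀ p : Fin n, (w.1 p : ℕ) = blockOf l m ((π p : ℕ)), Ψs π) := by
  have hn : 0 < n := by
    rcases Nat.eq_zero_or_pos n with rfl | h
    · simp at hx1
    · exact h
  have hc : 0 < ∑ i, x i := by rw [hx1]; exact one_pos
  have hL := lump_T (F := F) hn x
  have hS0 := hL.nonneg bru_surj (TGB_nonneg hn hx)
  have hSi := hL.irr bru_surj (TGB_nonneg hn hx) (TGB_irr hn hx)
  have hpush : Ψs = push bru Ψg := stationary_unique hS0 hSi hc hΨs (hL.stationary hΨg)
  have ha : ∀ C C' : Cosets F n, bru C = bru C' → Ψg C = Ψg C' :=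
    fun C C' h => psi_const hn hx hc hΨg h
  refine ⟨?_, ?_, ?_, ?_⟩
  · intro π C C' h h'
    exact ha C C' ((bru_eq h).trans (bru_eq h').symm)
  · intro π
    rw [hpush, push_apply]
    refine Finset.sum_congr ?_ fun _ _ => rfl
    ext C
    simp [inDC_iff]
  · intro π C h
    rw [← dcSize_eq, dcSize, push_apply, hpush, push_apply, Finset.sum_mul]
    refine Finset.sum_congr rfl fun D hD => ?_
    rw [one_mul]
    exact ha D C ((Finset.mem_filter.mp hD).2.trans (bru_eq h).symm)
  · intro l m hm1 hm hcomp xb hxb Ψw hΨw w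
    have hq := card_pos_real (F := F)
    have hW := lumpW_T hn hm1 hm hq hcomp hxb
    rw [sum_xb hm1 hm hq hcomp hxb] at hΨw
    have hu := stationary_unique (hW.nonneg (destd_surj hm) hS0)
      (hW.irr (destd_surj hm) hS0 hSi) hc hΨw (hW.stationary hΨs)
    rw [hu, push_apply]
    refine Finset.sum_congr ?_ fun _ _ => rfl
    ext π
    simp [destd_iff]

end QTsetlin
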